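/- Let B ∈ ℝ^{d×d} be Hurwitz, b ∈ ℝ^d, and let x* be the unique solution of Bx + b = 0. Let ν be a probability law on ℝ^d with mean 0, symmetric positive definite covariance Σ, and finite third absolute moment. Let Σ_Y be the unique positive semidefinite solution of BΣ_Y + Σ_Y Bᵀ + Σ = 0, and let γ be the centered Gaussian law on ℝ^d with covariance Σ_Y. Then there exist α' > 0 and finite constants U₂, U₂' such that for every α ∈ (0,α'): the rescaled linear stochastic approximation chain Y_{k+1} = (I + αB)Y_k + √α · ξ_k, with ξ_k i.i.d. ∼ ν, admits a unique invariant probability measure π_α (invariance meaning: Y ∼ π_α and ξ ∼ ν independent imply (I + αB)Y + √α ξ ∼ π_α), and: (i) for every 1-Lipschitz h : ℝ^d → ℝ, |∫h dπ_α − ∫h dγ| ≤ U₂ · α^{1/2} log(1/α); (ii) for every ζ ∈ ℝ^d with ‖ζ‖ = 1 and every a > 0, |π_α{y : ⟨y, ζ⟩ > a} − P(Z_ζ > a)| ≤ U₂' · α^{1/4}(log(1/α))^{1/2}/a, where Z_ζ is a real Gaussian with mean 0 and variance ζᵀΣ_Yζ. -/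

import Mathlib

/-!
Let `A = 1 + α B`. The whole argument rests on the identity `A Σ_Y Aᵀ + α S_α = Σ_Y` with
`S_α = Σ - α B Σ_Y Bᵀ` (`discrete_lyapunov`): the Gaussian law `γ` is exactly invariant for the
chain driven by Gaussian noise of covariance `S_α`. Reading the Lyapunov equation as a drift
inequality for the norm defined by `Σ_Y`, which is positive definite because `Σ` is, also gives
`‖Aⁿ‖ ≤ κ √(1 - c α)ⁿ` for small `α` (`exists_contraction`).

Invariant law: since `∑ ‖Aᵏ‖ < ∞`, the series `∑ Aᵏ √α ξₖ` converges, its law is invariant, and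
iterating the equation satisfied by the characteristic function of an invariant law shows that
there is no other one (`exists_unique_invariant`).

Wasserstein bound: Lindeberg's replacement method. Starting from `π_α`, the noises are replaced
one after the other by Gaussian noises of covariance `S_α`; after all of them are replaced, the law
is `γ`, the initial condition being forgotten by contraction (`abs_integral_sub_le_of_steps`). When
the noise multiplied by `√α Aⁿ` is replaced, the `n` noises with smaller powers of `A` are already
Gaussian, and average the test function against a Gaussian law whose covariance dominates
`l (1 - ρⁿ) I`, where `ρ = 1 - c α`. A 1-Lipschitz function averaged against a Gaussian law of
standard deviation `s` has second derivative `O(1 / s)` and third-order Taylor remainder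
`O(1 / s²)`, by the Cameron–Martin formula (`exists_hasExpansion`). The means of the two noises
agree and their covariances differ by `O(α)`, so that the replacement costs
`O(α^(3/2) ρⁿ / (1 - ρⁿ))`, plus `O(√α)` for `n = 0`, where there is no smoothing yet. Summing over
`n` gives `O(√α log (1 / α))` (`sum_pow_div_le`, `exists_wasserstein_bound`).

Tail bound: half-line indicators are compared with ramps of width `a √δ`, where
`δ = √α log (1 / α)`. The Wasserstein bound costs `O(δ / (a √δ))`, and since the Gaussian density is
`O(a⁻²)` beyond `a / 2`, the ramps cost `O(a √δ a⁻²)` (`abs_tail_sub_le`, `tail_rate`).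
-/

namespace LinSA

/-! ### The standard Gaussian density and the Cameron–Martin formula -/

section Smoothing
open MeasureTheory ProbabilityTheory Complex
open scoped RealInnerProductSpace

variable {E : Type*} [NormedAddCommGroup E] [InnerProductSpace ℝ E] [FiniteDimensional ℝ E]
  [MeasurableSpace E] [BorelSpace E]

/-- The standard Gaussian law has a density proportional to `exp (-‖x‖² / 2)` with respect to
Lebesgue measure. -/
lemma stdGaussian_eq_withDensity : ∃ c : ℝ, 0 < c ∧
    stdGaussian E = (volume : Measure E).withDensity
      (fun x => ENNReal.ofReal (c * Real.exp (-(1 / 2) * ‖x‖ ^ 2))) := by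
  set J : ℝ := ∫ x : E, Real.exp (-(1 / 2) * ‖x‖ ^ 2) with hJ
  have hJv : J = (Real.pi / (1 / 2)) ^ (Module.finrank ℝ E / 2 : ℝ) :=
    GaussianFourier.integral_rexp_neg_mul_sq_norm (V := E) (by norm_num)
  have hJpos : 0 < J := by rw [hJv]; positivity
  have hint : Integrable (fun x : E => Real.exp (-(1 / 2) * ‖x‖ ^ 2)) :=
    Integrable.of_integral_ne_zero hJpos.ne'
  have hJC : (J : ℂ) = (Real.pi / (1 / 2 : ℂ)) ^ (Module.finrank ℝ E / 2 : ℂ) := by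
    rw [← GaussianFourier.integral_cexp_neg_mul_sq_norm (V := E) (b := 1 / 2) (by norm_num), hJ,
      ← integral_complex_ofReal]
    congr with x
    push_cast
    rfl
  have hJC0 : (J : ℂ) ≠ 0 := by exact_mod_cast hJpos.ne'
  refine ⟨J⁻¹, by positivity, ?_⟩
  have hint' : Integrable (fun x : E => J⁻¹ * Real.exp (-(1 / 2) * ‖x‖ ^ 2)) := hint.const_mul _
  have hfin : IsFiniteMeasure ((volume : Measure E).withDensity
      (fun x => ENNReal.ofReal (J⁻¹ * Real.exp (-(1 / 2) * ‖x‖ ^ 2)))) :=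
    isFiniteMeasure_withDensity_ofReal hint'.2
  apply Measure.ext_of_charFun
  ext t
  rw [charFun_stdGaussian, charFun_apply,
    integral_withDensity_eq_integral_toReal_smul (by fun_prop) (by simp)]
  have h := GaussianFourier.integral_cexp_neg_mul_sq_norm_add (V := E) (b := 1 / 2)
    (by norm_num) I t
  rw [← hJC] at h
  have : ∀ x : E, (ENNReal.ofReal (J⁻¹ * Real.exp (-(1 / 2) * ‖x‖ ^ 2))).toReal •
      exp (⟪x, t⟫ * I) = (J : ℂ)⁻¹ * exp (-(1 / 2) * ‖x‖ ^ 2 + I * ⟪t, x⟫) := by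
    intro x
    rw [ENNReal.toReal_ofReal (by positivity), Complex.exp_add, real_inner_comm]
    simp only [real_smul]
    push_cast
    ring_nf
  simp_rw [this, integral_const_mul, h, ← mul_assoc, inv_mul_cancel₀ hJC0, one_mul, I_sq]
  congr 1
  ring

/-- Cameron–Martin formula for the standard Gaussian law, read off from the translation
invariance of Lebesgue measure. -/
lemma integral_add_stdGaussian (f : E → ℝ) (v : E) :
    ∫ x, f (v + x) ∂(stdGaussian E)
      = ∫ x, Real.exp (⟪v, x⟫ - ‖v‖ ^ 2 / 2) * f x ∂(stdGaussian E) := by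
  obtain ⟨c, hc, h⟩ := stdGaussian_eq_withDensity (E := E)
  rw [h, integral_withDensity_eq_integral_toReal_smul (by fun_prop) (by simp),
    integral_withDensity_eq_integral_toReal_smul (by fun_prop) (by simp),
    ← integral_add_left_eq_self (μ := (volume : Measure E)) _ (-v)]
  congr with x
  rw [ENNReal.toReal_ofReal (by positivity), ENNReal.toReal_ofReal (by positivity)]
  have : ‖-v + x‖ ^ 2 = ‖x‖ ^ 2 - 2 * ⟪v, x⟫ + ‖v‖ ^ 2 := by
    rw [show -v + x = x - v by abel, norm_sub_sq_real, real_inner_comm]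
  simp only [smul_eq_mul, add_neg_cancel_left, this]
  rw [mul_assoc, mul_assoc, ← mul_assoc (Real.exp _) (Real.exp _), ← Real.exp_add]
  congr 3
  ring

lemma integrable_exp_norm_stdGaussian :
    Integrable (fun x : E => Real.exp (2 * (‖x‖ + 1))) (stdGaussian E) := by
  obtain ⟨C, hC, h⟩ := IsGaussian.exists_integrable_exp_sq (stdGaussian E)
  refine (h.const_mul (Real.exp (2 + 1 / C))).mono' (by fun_prop) (ae_of_all _ fun x => ?_)
  rw [Real.norm_of_nonneg (by positivity), ← Real.exp_add]
  apply Real.exp_le_exp.2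
  have : 0 ≤ C * (‖x‖ - 1 / C) ^ 2 := by positivity
  have h2 : C * (‖x‖ - 1 / C) ^ 2 = C * ‖x‖ ^ 2 - 2 * ‖x‖ + 1 / C := by
    field_simp
    ring
  linarith

lemma abs_exp_sub_taylor_le (y : ℝ) :
    |Real.exp y - 1 - y - y ^ 2 / 2| ≤ |y| ^ 3 * Real.exp |y| := by
  have h := Complex.norm_exp_sub_sum_le_norm_mul_exp (y : ℂ) 3
  simp only [Finset.sum_range_succ, Finset.sum_range_zero, Nat.factorial] at h
  have e : (exp (y : ℂ) - (0 + (y : ℂ) ^ 0 / ((1 : ℕ) : ℂ) + (y : ℂ) ^ 1 / (((0 + 1) * 1 : ℕ) : ℂ)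
      + (y : ℂ) ^ 2 / (((1 + 1) * ((0 + 1) * 1) : ℕ) : ℂ)))
      = ((Real.exp y - 1 - y - y ^ 2 / 2 : ℝ) : ℂ) := by
    push_cast; ring
  rw [e, Complex.norm_real, Complex.norm_real] at h
  exact h

/-- Third-order remainder of the Cameron–Martin density in the shift: `p` stands for `⟪v, x⟫`,
`t` for `‖v‖` and `r` for `‖x‖`. -/
lemma abs_density_remainder_le {p t r : ℝ} (ht : 0 ≤ t) (ht1 : t ≤ 1) (hr : 0 ≤ r)
    (hp : |p| ≤ t * r) :
    |Real.exp (p - t ^ 2 / 2) - 1 - p - (p ^ 2 - t ^ 2) / 2|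
      ≤ 2 * t ^ 3 * ((r + 1) ^ 3 * Real.exp (r + 1)) := by
  set y := p - t ^ 2 / 2 with hy
  have hyle : |y| ≤ t * (r + 1) := by
    rw [abs_le] at hp ⊢
    constructor <;> nlinarith
  have hyle' : |y| ≤ r + 1 := hyle.trans (by nlinarith)
  have h1 := abs_exp_sub_taylor_le y
  have h2 : |y| ^ 3 * Real.exp |y| ≤ t ^ 3 * ((r + 1) ^ 3 * Real.exp (r + 1)) := by
    rw [← mul_assoc, ← mul_pow]
    gcongr
  have h3 : |y + y ^ 2 / 2 - p - (p ^ 2 - t ^ 2) / 2| ≤ t ^ 3 * (r + 1) := by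
    have : y + y ^ 2 / 2 - p - (p ^ 2 - t ^ 2) / 2 = - p * t ^ 2 / 2 + t ^ 4 / 8 := by
      rw [hy]; ring
    rw [this]
    have h4 : t ^ 4 ≤ t ^ 3 := pow_le_pow_of_le_one ht ht1 (by norm_num)
    have h5 : |p * t ^ 2| ≤ t ^ 3 * r := by
      rw [abs_mul, abs_of_nonneg (sq_nonneg t)]
      nlinarith [sq_nonneg t]
    have h6 : 0 ≤ t ^ 3 := by positivity
    have h7 : 0 ≤ t ^ 4 := by positivity
    rw [abs_le] at h5 ⊢
    constructor <;> nlinarith [mul_nonneg h6 hr]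
  have h8 : t ^ 3 * (r + 1) ≤ t ^ 3 * ((r + 1) ^ 3 * Real.exp (r + 1)) := by
    gcongr
    have : 1 ≤ Real.exp (r + 1) := Real.one_le_exp (by linarith)
    have h9 : (r + 1) ≤ (r + 1) ^ 3 := by nlinarith [sq_nonneg r, pow_nonneg hr 3]
    nlinarith [pow_nonneg (show 0 ≤ r + 1 by linarith) 3]
  have : Real.exp y - 1 - p - (p ^ 2 - t ^ 2) / 2 = (Real.exp y - 1 - y - y ^ 2 / 2)
      + (y + y ^ 2 / 2 - p - (p ^ 2 - t ^ 2) / 2) := by ring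
  rw [this]
  refine (abs_add_le _ _).trans ?_
  linarith

lemma pow_mul_exp_le {r : ℝ} (hr : 0 ≤ r) :
    r * ((r + 1) ^ 3 * Real.exp (r + 1)) ≤ 24 * Real.exp (2 * (r + 1)) := by
  have h := Real.pow_div_factorial_le_exp (r + 1) (by linarith) 4
  have h1 : (r + 1) ^ 4 ≤ 24 * Real.exp (r + 1) := by
    simp only [Nat.factorial] at h
    norm_num at h
    linarith
  have h2 : r * (r + 1) ^ 3 ≤ (r + 1) ^ 4 := by
    rw [pow_succ' (r + 1) 3]; gcongr; linarith
  have h3 : Real.exp (2 * (r + 1)) = Real.exp (r + 1) * Real.exp (r + 1) := by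
    rw [two_mul, Real.exp_add]
  rw [h3, ← mul_assoc, ← mul_assoc]
  exact mul_le_mul_of_nonneg_right (h2.trans h1) (Real.exp_pos _).le

end Smoothing

/-! ### Second-order expansions of Gaussian averages -/

section Taylor
open MeasureTheory ProbabilityTheory
open scoped RealInnerProductSpace

variable {E : Type*} [NormedAddCommGroup E] [InnerProductSpace ℝ E]

/-- `g` has at `w` a second-order expansion `g (w + v) = g w + l v + Q v v / 2 + O(‖v‖³)`, where
the bilinear form `Q` is bounded by `K₂` and the cubic remainder has constant `K₃`. No regularity
of `g` away from `w` is part of the notion. -/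
def HasExpansion (g : E → ℝ) (w : E) (K₂ K₃ : ℝ) : Prop :=
  ∃ (l : E →ₗ[ℝ] ℝ) (Q : E →ₗ[ℝ] E →ₗ[ℝ] ℝ),
    (∀ u v, |Q u v| ≤ K₂ * (‖u‖ * ‖v‖)) ∧
    ∀ v, |g (w + v) - g w - l v - Q v v / 2| ≤ K₃ * ‖v‖ ^ 3

variable [FiniteDimensional ℝ E] [MeasurableSpace E] [BorelSpace E]

/-- Smoothing by the standard Gaussian law, at the origin. The Cameron–Martin formula moves the
shift from `f` to the density, whose expansion provides the linear and bilinear forms. -/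
lemma exists_hasExpansion_zero : ∃ C : ℝ, 0 < C ∧ ∀ f : E → ℝ, LipschitzWith 1 f → f 0 = 0 →
    HasExpansion (fun z => ∫ x, f (z + x) ∂(stdGaussian E)) 0 C C := by
  set W : E → ℝ := fun x => Real.exp (2 * (‖x‖ + 1)) with hW
  have hWi : Integrable W (stdGaussian E) := integrable_exp_norm_stdGaussian
  set J := ∫ x, W x ∂(stdGaussian E) with hJ
  have hJ1 : 1 ≤ J := by
    have : ∫ _ : E, (1 : ℝ) ∂(stdGaussian E) ≤ J :=
      integral_mono (integrable_const _) hWi fun x => Real.one_le_exp (by positivity)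
    simpa using this
  refine ⟨48 * J, by linarith, fun f hf hf0 => ?_⟩
  have hfc : Continuous f := hf.continuous
  have hfx : ∀ x, |f x| ≤ ‖x‖ := fun x => by
    simpa [hf0, Real.dist_eq] using hf.dist_le_mul x 0
  -- every integrand below is dominated by a multiple of `W`
  have key : ∀ (φ : E → ℝ) (k : ℝ), Continuous φ →
      (∀ x, |φ x| ≤ k * (‖x‖ * ((‖x‖ + 1) ^ 3 * Real.exp (‖x‖ + 1)))) → 0 ≤ k →
      Integrable φ (stdGaussian E) ∧ |∫ x, φ x ∂(stdGaussian E)| ≤ k * 24 * J := by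
    intro φ k hφ hb hk
    have hb' : ∀ x, ‖φ x‖ ≤ k * 24 * W x := fun x => by
      rw [Real.norm_eq_abs, mul_assoc]
      exact (hb x).trans (mul_le_mul_of_nonneg_left (pow_mul_exp_le (norm_nonneg x)) hk)
    refine ⟨(hWi.const_mul (k * 24)).mono' hφ.aestronglyMeasurable (ae_of_all _ hb'), ?_⟩
    rw [hJ, ← integral_const_mul]
    exact norm_integral_le_of_norm_le (hWi.const_mul (k * 24)) (ae_of_all _ hb')
  have hr1 : ∀ x : E, 1 ≤ Real.exp (‖x‖ + 1) := fun x => Real.one_le_exp (by positivity)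
  have hpoly : ∀ (x : E) (q : ℝ), 0 ≤ q → q ≤ (‖x‖ + 1) ^ 3 →
      q ≤ (‖x‖ + 1) ^ 3 * Real.exp (‖x‖ + 1) := fun x q hq h =>
    h.trans (le_mul_of_one_le_right (by positivity) (hr1 x))
  have h1 : Integrable f (stdGaussian E) := by
    refine (key f 1 hfc (fun x => ?_) zero_le_one).1
    rw [one_mul]
    refine (hfx x).trans (le_mul_of_one_le_right (norm_nonneg x) (hpoly x 1 zero_le_one ?_))
    exact one_le_pow₀ (by linarith [norm_nonneg x])
  have h2 := fun v : E => key (fun x => ⟪v, x⟫ * f x) ‖v‖ (by fun_prop) (fun x => by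
    rw [abs_mul]
    have h3 : ‖x‖ ≤ (‖x‖ + 1) ^ 3 * Real.exp (‖x‖ + 1) :=
      hpoly x _ (norm_nonneg x) (by nlinarith [norm_nonneg x, pow_nonneg (norm_nonneg x) 3])
    calc |⟪v, x⟫| * |f x| ≤ (‖v‖ * ‖x‖) * ‖x‖ :=
          mul_le_mul (abs_real_inner_le_norm v x) (hfx x) (abs_nonneg _) (by positivity)
      _ = ‖v‖ * (‖x‖ * ‖x‖) := by ring
      _ ≤ _ := by gcongr) (norm_nonneg v)
  have h3 := fun u v : E => key (fun x => (⟪u, x⟫ * ⟪v, x⟫ - ⟪u, v⟫) * f x) (‖u‖ * ‖v‖)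
    (by fun_prop) (fun x => by
    rw [abs_mul]
    have h3 : ‖x‖ ^ 2 + 1 ≤ (‖x‖ + 1) ^ 3 * Real.exp (‖x‖ + 1) :=
      hpoly x _ (by positivity) (by nlinarith [norm_nonneg x, pow_nonneg (norm_nonneg x) 3])
    have h4 : |⟪u, x⟫ * ⟪v, x⟫ - ⟪u, v⟫| ≤ ‖u‖ * ‖v‖ * (‖x‖ ^ 2 + 1) := by
      refine (abs_sub _ _).trans ?_
      rw [abs_mul]
      have := mul_le_mul (abs_real_inner_le_norm u x) (abs_real_inner_le_norm v x)
        (abs_nonneg _) (by positivity)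
      have := abs_real_inner_le_norm u v
      nlinarith
    calc |⟪u, x⟫ * ⟪v, x⟫ - ⟪u, v⟫| * |f x| ≤ (‖u‖ * ‖v‖ * (‖x‖ ^ 2 + 1)) * ‖x‖ :=
          mul_le_mul h4 (hfx x) (abs_nonneg _) (by positivity)
      _ = ‖u‖ * ‖v‖ * (‖x‖ * (‖x‖ ^ 2 + 1)) := by ring
      _ ≤ _ := by gcongr) (by positivity)
  let l : E →ₗ[ℝ] ℝ :=
    { toFun := fun v => ∫ x, ⟪v, x⟫ * f x ∂(stdGaussian E)
      map_add' := fun u v => by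
        rw [← integral_add (h2 u).1 (h2 v).1]
        congr with x
        rw [inner_add_left, add_mul]
      map_smul' := fun c v => by
        rw [RingHom.id_apply, smul_eq_mul, ← integral_const_mul]
        congr with x
        rw [real_inner_smul_left, mul_assoc] }
  let Q : E →ₗ[ℝ] E →ₗ[ℝ] ℝ := LinearMap.mk₂ ℝ
    (fun u v => ∫ x, (⟪u, x⟫ * ⟪v, x⟫ - ⟪u, v⟫) * f x ∂(stdGaussian E))
    (fun u u' v => by
      rw [← integral_add (h3 u v).1 (h3 u' v).1]
      congr with x
      rw [inner_add_left, inner_add_left]; ring)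
    (fun c u v => by
      rw [smul_eq_mul, ← integral_const_mul]
      congr with x
      rw [real_inner_smul_left, real_inner_smul_left]; ring)
    (fun u v v' => by
      rw [← integral_add (h3 u v).1 (h3 u v').1]
      congr with x
      rw [inner_add_right, inner_add_left]; ring)
    (fun c u v => by
      rw [smul_eq_mul, ← integral_const_mul]
      congr with x
      rw [real_inner_smul_left, real_inner_smul_right]; ring)
  have hl : ∀ v, l v = ∫ x, ⟪v, x⟫ * f x ∂(stdGaussian E) := fun v => rfl
  have hQ : ∀ u v, Q u v = ∫ x, (⟪u, x⟫ * ⟪v, x⟫ - ⟪u, v⟫) * f x ∂(stdGaussian E) :=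
    fun u v => rfl
  refine ⟨l, Q, fun u v => ?_, fun v => ?_⟩
  · rw [hQ]
    refine (h3 u v).2.trans ?_
    have : 0 ≤ ‖u‖ * ‖v‖ := by positivity
    nlinarith
  simp only [zero_add]
  rcases le_total ‖v‖ 1 with hv | hv
  · -- small shifts: expand the Cameron–Martin density
    set R : E → ℝ := fun x => (Real.exp (⟪v, x⟫ - ‖v‖ ^ 2 / 2) - 1 - ⟪v, x⟫
      - (⟪v, x⟫ ^ 2 - ‖v‖ ^ 2) / 2) * f x with hR
    have hRk := key R (2 * ‖v‖ ^ 3) (by fun_prop) (fun x => by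
      rw [hR, abs_mul, mul_comm ‖x‖, ← mul_assoc]
      exact mul_le_mul (abs_density_remainder_le (norm_nonneg v) hv (norm_nonneg x)
        (abs_real_inner_le_norm v x)) (hfx x) (abs_nonneg _) (by positivity)) (by positivity)
    have e : ∫ x, f (v + x) ∂(stdGaussian E) = ∫ x, R x ∂(stdGaussian E)
        + ∫ x, f x ∂(stdGaussian E) + l v + Q v v / 2 := by
      have i1 : Integrable (fun x => R x + f x) (stdGaussian E) := hRk.1.add h1
      have i2 : Integrable (fun x => R x + f x + ⟪v, x⟫ * f x) (stdGaussian E) :=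
        i1.add (h2 v).1
      rw [integral_add_stdGaussian, hl, hQ, ← integral_div, ← integral_add hRk.1 h1,
        ← integral_add i1 (h2 v).1, ← integral_add i2 ((h3 v v).1.div_const 2)]
      congr with x
      simp only [hR, real_inner_self_eq_norm_sq]
      ring
    rw [e, show ∀ a b c d : ℝ, a + b + c + d - b - c - d = a by intros; ring]
    refine hRk.2.trans (le_of_eq (by ring))
  · -- large shifts: every term is at most of order `‖v‖³`
    have hsh : Integrable (fun x => f (v + x)) (stdGaussian E) := by
      refine ((integrable_const ‖v‖).add
        (IsGaussian.integrable_fun_id (μ := stdGaussian E)).norm).mono'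
        (by fun_prop) (ae_of_all _ fun x => ?_)
      exact (hfx _).trans (norm_add_le _ _)
    have a1 : |∫ x, f (v + x) ∂(stdGaussian E) - ∫ x, f x ∂(stdGaussian E)| ≤ ‖v‖ := by
      rw [← integral_sub hsh h1]
      have := norm_integral_le_of_norm_le_const (μ := stdGaussian E) (C := ‖v‖)
        (f := fun x => f (v + x) - f x) (ae_of_all _ fun x => by
          simpa [Real.dist_eq] using hf.dist_le_mul (v + x) x)
      simpa using this
    have a2 : |l v| ≤ ‖v‖ * 24 * J := (h2 v).2
    have a3 : |Q v v| ≤ ‖v‖ * ‖v‖ * 24 * J := (h3 v v).2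
    have b1 : ‖v‖ ≤ ‖v‖ ^ 3 := by nlinarith [sq_nonneg ‖v‖]
    have b2 : ‖v‖ * ‖v‖ ≤ ‖v‖ ^ 3 := by nlinarith [sq_nonneg ‖v‖]
    have c1 : ‖v‖ * J ≤ ‖v‖ ^ 3 * J := by gcongr
    have c2 : ‖v‖ * ‖v‖ * J ≤ ‖v‖ ^ 3 * J := by gcongr
    have c3 : ‖v‖ ≤ ‖v‖ ^ 3 * J := b1.trans (le_mul_of_one_le_right (by positivity) hJ1)
    rw [abs_le] at a1 a2 a3 ⊢
    constructor <;> nlinarith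

/-- Smoothing a 1-Lipschitz function by a Gaussian of standard deviation `s` gives a second
derivative of order `1 / s` and a third-order remainder of order `1 / s²`. -/
lemma exists_hasExpansion : ∃ C : ℝ, 0 < C ∧ ∀ f : E → ℝ, LipschitzWith 1 f → ∀ s : ℝ, 0 < s →
    ∀ w, HasExpansion (fun z => ∫ x, f (z + s • x) ∂(stdGaussian E)) w (C / s) (C / s ^ 2) := by
  obtain ⟨C, hC, H⟩ := exists_hasExpansion_zero (E := E)
  refine ⟨C, hC, fun f hf s hs w => ?_⟩
  -- rescale to `s = 1`, base point `0`
  set k : E → ℝ := fun x => s⁻¹ * (f (w + s • x) - f w) with hk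
  have hkL : LipschitzWith 1 k := by
    refine LipschitzWith.of_dist_le_mul fun x y => ?_
    have := hf.dist_le_mul (w + s • x) (w + s • y)
    rw [NNReal.coe_one, one_mul, dist_add_left, dist_smul₀, Real.norm_of_nonneg hs.le,
      Real.dist_eq] at this
    rw [Real.dist_eq, hk, NNReal.coe_one, one_mul, ← mul_sub, sub_sub_sub_cancel_right, abs_mul,
      abs_of_pos (inv_pos.2 hs), inv_mul_le_iff₀ hs]
    exact this
  obtain ⟨l, Q, hQ, hexp⟩ := H k hkL (by simp [hk])
  have hint : ∀ z, Integrable (fun x => f (z + s • x)) (stdGaussian E) := fun z => by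
    refine ((integrable_const |f z|).add
      ((IsGaussian.integrable_fun_id (μ := stdGaussian E)).norm.const_mul s)).mono'
      (by have := hf.continuous; fun_prop) (ae_of_all _ fun x => ?_)
    have := hf.dist_le_mul (z + s • x) z
    simp only [NNReal.coe_one, one_mul, dist_self_add_left, norm_smul, Real.dist_eq,
      Real.norm_of_nonneg hs.le] at this
    rw [Real.norm_eq_abs]
    have h2 := abs_sub_abs_le_abs_sub (f (z + s • x)) (f z)
    change |f (z + s • x)| ≤ |f z| + s * ‖x‖
    linarith
  have hkf : ∀ v, ∫ x, k (s⁻¹ • v + x) ∂(stdGaussian E)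
      = s⁻¹ * (∫ x, f (w + v + s • x) ∂(stdGaussian E) - f w) := fun v => by
    have : ∀ x, k (s⁻¹ • v + x) = s⁻¹ * (f (w + v + s • x) - f w) := fun x => by
      simp only [hk, smul_add, smul_smul, mul_inv_cancel₀ hs.ne', one_smul, add_assoc]
    simp_rw [this]
    rw [integral_const_mul, integral_sub (hint _) (integrable_const _)]
    simp
  have hk0 := hkf 0
  refine ⟨l, s⁻¹ • Q, fun u v => ?_, fun v => ?_⟩
  · rw [LinearMap.smul_apply, LinearMap.smul_apply, smul_eq_mul, abs_mul,
      abs_of_pos (inv_pos.2 hs), div_eq_inv_mul, mul_assoc]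
    exact mul_le_mul_of_nonneg_left (hQ u v) (inv_pos.2 hs).le
  · have h := hexp (s⁻¹ • v)
    simp only [smul_zero, zero_add, add_zero] at h hk0
    rw [hkf, hk0, norm_smul, Real.norm_of_nonneg (inv_pos.2 hs).le] at h
    simp only [map_smul, LinearMap.smul_apply, smul_eq_mul] at h ⊢
    have h2 := mul_le_mul_of_nonneg_left h hs.le
    rw [← abs_of_pos hs, ← abs_mul, abs_of_pos hs] at h2
    refine (le_of_eq ?_).trans (h2.trans (le_of_eq ?_))
    · congr 1
      field_simp
      ring
    · field_simp

end Taylor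

/-! ### Gaussian convolutions and exchange of noises -/

section Gauss
open MeasureTheory ProbabilityTheory Matrix
open scoped RealInnerProductSpace

/-- A Lipschitz function of a shifted integrable vector is integrable. -/
lemma integrable_lipschitz_add {E : Type*} [NormedAddCommGroup E] [MeasurableSpace E]
    [BorelSpace E] [SecondCountableTopology E] {h : E → ℝ} (hh : LipschitzWith 1 h)
    {Ω : Type*} [MeasurableSpace Ω] {μ : Measure Ω} [IsFiniteMeasure μ] {X : Ω → E}
    (hX : Integrable X μ) (z : E) : Integrable (fun ω => h (z + X ω)) μ := by
  refine ((integrable_const |h z|).add hX.norm).mono'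
    ((hh.continuous.comp (continuous_const.add continuous_id)).comp_aestronglyMeasurable hX.1)
    (ae_of_all _ fun x => ?_)
  have := hh.dist_le_mul (z + X x) z
  simp only [NNReal.coe_one, one_mul, dist_self_add_left, Real.dist_eq] at this
  have h2 := abs_sub_abs_le_abs_sub (h (z + X x)) (h z)
  change |h (z + X x)| ≤ |h z| + ‖X x‖
  linarith

/-- Averaging a 1-Lipschitz function over shifts keeps it 1-Lipschitz. -/
lemma lipschitz_integral_add {E : Type*} [NormedAddCommGroup E] [MeasurableSpace E]
    [BorelSpace E] [SecondCountableTopology E] {h : E → ℝ} (hh : LipschitzWith 1 h)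
    {Ω : Type*} [MeasurableSpace Ω] {μ : Measure Ω} [IsProbabilityMeasure μ] {X : Ω → E}
    (hX : Integrable X μ) : LipschitzWith 1 (fun z => ∫ ω, h (z + X ω) ∂μ) := by
  refine LipschitzWith.of_dist_le_mul fun x y => ?_
  rw [Real.dist_eq, ← integral_sub (integrable_lipschitz_add hh hX x)
    (integrable_lipschitz_add hh hX y)]
  have := norm_integral_le_of_norm_le_const (μ := μ) (C := dist x y)
    (f := fun ω => h (x + X ω) - h (y + X ω)) (ae_of_all _ fun ω => by
      simpa [Real.dist_eq] using hh.dist_le_mul (x + X ω) (y + X ω))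
  simpa using this

variable {ι : Type*} [Fintype ι] [DecidableEq ι]

local notation "𝔼" => EuclideanSpace ℝ ι
local notation "T" => toEuclideanCLM (𝕜 := ℝ) (n := ι)

lemma adjoint_toEuclideanCLM (M : Matrix ι ι ℝ) :
    ContinuousLinearMap.adjoint (T M) = T Mᵀ := by
  rw [← conjTranspose_eq_transpose_of_trivial, ← star_eq_conjTranspose, map_star]
  rfl

lemma charFun_map_clm {E : Type*} [NormedAddCommGroup E] [InnerProductSpace ℝ E]
    [CompleteSpace E] [MeasurableSpace E] [BorelSpace E] [SecondCountableTopology E]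
    (μ : Measure E) (L : E →L[ℝ] E) (t : E) :
    charFun (μ.map L) t = charFun μ (ContinuousLinearMap.adjoint L t) := by
  rw [charFun_apply, charFun_apply, integral_map (by fun_prop) (by fun_prop)]
  simp_rw [ContinuousLinearMap.adjoint_inner_right]

lemma quad_congr (M C : Matrix ι ι ℝ) (x : 𝔼) :
    (T Mᵀ x).ofLp ⬝ᵥ C *ᵥ (T Mᵀ x).ofLp = x.ofLp ⬝ᵥ (M * C * Mᵀ) *ᵥ x.ofLp := by
  rw [ofLp_toEuclideanCLM, ← mulVec_mulVec, ← mulVec_mulVec, mulVec_transpose,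
    ← dotProduct_mulVec]

/-- Stability of centered Gaussian laws under linear maps and independent sums. -/
lemma multivariateGaussian_conv {C₁ C₂ : Matrix ι ι ℝ} (h₁ : C₁.PosSemidef) (h₂ : C₂.PosSemidef)
    (M : Matrix ι ι ℝ) :
    multivariateGaussian 0 (M * C₁ * Mᵀ + C₂)
      = ((multivariateGaussian 0 C₁).map (T M)) ∗ (multivariateGaussian 0 C₂) := by
  have h₃ : (M * C₁ * Mᵀ).PosSemidef := by
    simpa using h₁.mul_mul_conjTranspose_same M
  have : IsProbabilityMeasure ((multivariateGaussian 0 C₁).map (T M)) :=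
    Measure.isProbabilityMeasure_map (by fun_prop)
  apply Measure.ext_of_charFun
  ext t
  rw [charFun_conv, charFun_map_clm, adjoint_toEuclideanCLM,
    charFun_multivariateGaussian (h₃.add h₂), charFun_multivariateGaussian h₁,
    charFun_multivariateGaussian h₂, ← Complex.exp_add, quad_congr, add_mulVec, dotProduct_add]
  congr 1
  simp
  ring

/-- Averaging over the Gaussian law of covariance `M C₁ Mᵀ + C₂` is averaging over the two
independent Gaussian summands in turn. -/
lemma integral_add_conv {h : 𝔼 → ℝ} (hh : LipschitzWith 1 h) {C₁ C₂ : Matrix ι ι ℝ}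
    (h₁ : C₁.PosSemidef) (h₂ : C₂.PosSemidef) (M : Matrix ι ι ℝ) (z : 𝔼) :
    ∫ y, h (z + y) ∂(multivariateGaussian 0 (M * C₁ * Mᵀ + C₂))
      = ∫ x, (∫ y, h (z + T M x + y) ∂(multivariateGaussian 0 C₂))
          ∂(multivariateGaussian 0 C₁) := by
  have hi := integrable_lipschitz_add hh (IsGaussian.integrable_fun_id
    (μ := multivariateGaussian 0 (M * C₁ * Mᵀ + C₂))) z
  rw [multivariateGaussian_conv h₁ h₂] at hi ⊢
  have : IsProbabilityMeasure ((multivariateGaussian 0 C₁).map (T M)) :=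
    Measure.isProbabilityMeasure_map (by fun_prop)
  rw [integral_conv hi, integral_map (by fun_prop)]
  · simp_rw [add_assoc]
  · simp_rw [← add_assoc]
    exact ((lipschitz_integral_add hh (IsGaussian.integrable_fun_id
      (μ := multivariateGaussian 0 C₂))).continuous.comp
        (continuous_const.add continuous_id)).aestronglyMeasurable

/-- Smoothing by any Gaussian law whose covariance dominates `s² I` is at least as good as
smoothing by the isotropic one. -/
lemma exists_hasExpansion_multivariateGaussian : ∃ C : ℝ, 0 < C ∧ ∀ h : 𝔼 → ℝ,
    LipschitzWith 1 h → ∀ (s : ℝ) (V : Matrix ι ι ℝ), 0 < s →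
      (V - s ^ 2 • (1 : Matrix ι ι ℝ)).PosSemidef → ∀ w,
      HasExpansion (fun z => ∫ y, h (z + y) ∂(multivariateGaussian 0 V)) w (C / s) (C / s ^ 2) := by
  obtain ⟨C, hC, H⟩ := exists_hasExpansion (E := 𝔼)
  refine ⟨C, hC, fun h hh s V hs hV w => ?_⟩
  have hV' : V = (s • (1 : Matrix ι ι ℝ)) * 1 * (s • (1 : Matrix ι ι ℝ))ᵀ
      + (V - s ^ 2 • (1 : Matrix ι ι ℝ)) := by
    simp [smul_smul, sq]
  have := H (fun z => ∫ y, h (z + y) ∂(multivariateGaussian 0 (V - s ^ 2 • 1)))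
    (lipschitz_integral_add hh IsGaussian.integrable_fun_id) s hs w
  convert this using 2 with z
  rw [hV', integral_add_conv hh PosSemidef.one hV, multivariateGaussian_zero_one, ← hV']
  simp

/-- A second-order expansion at `w` turns into an expansion of the mean over a centered
perturbation, in which only the covariance of the perturbation enters. -/
lemma HasExpansion.integral_sub_le {g : 𝔼 → ℝ} {w : 𝔼} {K₂ K₃ : ℝ}
    (hg : HasExpansion g w K₂ K₃) (hgL : LipschitzWith 1 g) (M : 𝔼 →L[ℝ] 𝔼)
    {μ₁ μ₂ : Measure 𝔼} [IsProbabilityMeasure μ₁] [IsProbabilityMeasure μ₂]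
    (m₁ : ∫ x, x ∂μ₁ = 0) (m₂ : ∫ x, x ∂μ₂ = 0) (i₁ : MemLp id 3 μ₁) (i₂ : MemLp id 3 μ₂)
    {c₁ c₂ : ι → ι → ℝ} (hc₁ : ∀ i j, ∫ x, x i * x j ∂μ₁ = c₁ i j)
    (hc₂ : ∀ i j, ∫ x, x i * x j ∂μ₂ = c₂ i j) (hK₃ : 0 ≤ K₃) :
    |∫ x, g (w + M x) ∂μ₁ - ∫ x, g (w + M x) ∂μ₂|
      ≤ K₂ * ‖M‖ ^ 2 * (∑ i, ∑ j, |c₁ i j - c₂ i j|)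
        + K₃ * ‖M‖ ^ 3 * (∫ x, ‖x‖ ^ 3 ∂μ₁ + ∫ x, ‖x‖ ^ 3 ∂μ₂) := by
  obtain ⟨l, Q, hQ, hexp⟩ := hg
  let e : ι → 𝔼 := fun i => EuclideanSpace.single i 1
  have he : ∀ i, ‖e i‖ = 1 := fun i => by simp [e]
  have key : ∀ (μ : Measure 𝔼) [IsProbabilityMeasure μ] (c : ι → ι → ℝ), ∫ x, x ∂μ = 0 →
      MemLp id 3 μ → (∀ i j, ∫ x, x i * x j ∂μ = c i j) →
      |∫ x, g (w + M x) ∂μ - g w - (∑ i, ∑ j, c i j * Q (M (e i)) (M (e j))) / 2|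
        ≤ K₃ * ‖M‖ ^ 3 * ∫ x, ‖x‖ ^ 3 ∂μ := by
    intro μ _ c hm hi hc
    have h1 : Integrable (fun x : 𝔼 => x) μ := hi.integrable (by norm_num)
    have h3 : Integrable (fun x : 𝔼 => ‖x‖ ^ 3) μ := by
      simpa using hi.integrable_norm_pow (by norm_num)
    have hcoord : ∀ i, MemLp (fun x : 𝔼 => x i) 2 μ := fun i =>
      ((hi.mono_exponent (p := 2) (by norm_num)).norm).mono' (by fun_prop)
        (ae_of_all _ fun x => by simpa using PiLp.norm_apply_le x i)
    have hij : ∀ i j, Integrable (fun x : 𝔼 => x i * x j) μ := fun i j =>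
      (hcoord i).integrable_mul (hcoord j)
    have hgi : Integrable (fun x => g (w + M x)) μ :=
      integrable_lipschitz_add hgL (M.integrable_comp h1) w
    let lc : 𝔼 →L[ℝ] ℝ := l.toContinuousLinearMap.comp M
    have hlc : ∀ x, lc x = l (M x) := fun x => rfl
    have hl0 : ∫ x, l (M x) ∂μ = 0 := by
      simp_rw [← hlc]
      rw [ContinuousLinearMap.integral_comp_comm _ h1, hm, map_zero]
    have hli : Integrable (fun x => l (M x)) μ := lc.integrable_comp h1
    have hQx : ∀ x, Q (M x) (M x) = ∑ i, ∑ j, (x i * x j) * Q (M (e i)) (M (e j)) := by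
      intro x
      have hx : x = ∑ i, x i • e i := by
        ext k
        simp [e, Finset.sum_apply, Pi.single_apply]
      conv_lhs => rw [hx]
      simp only [map_sum, map_smul, LinearMap.sum_apply, LinearMap.smul_apply, smul_eq_mul,
        Finset.mul_sum]
      rw [Finset.sum_comm]
      exact Finset.sum_congr rfl fun i _ => Finset.sum_congr rfl fun j _ => by ring
    have hQi : Integrable (fun x => Q (M x) (M x)) μ := by
      simp_rw [hQx]
      exact integrable_finsetSum _ fun i _ => integrable_finsetSum _ fun j _ =>
        (hij i j).mul_const _
    have hQint : ∫ x, Q (M x) (M x) ∂μ = ∑ i, ∑ j, c i j * Q (M (e i)) (M (e j)) := by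
      simp_rw [hQx]
      rw [integral_finsetSum _ fun i _ => integrable_finsetSum _ fun j _ =>
        (hij i j).mul_const _]
      refine Finset.sum_congr rfl fun i _ => ?_
      rw [integral_finsetSum _ fun j _ => (hij i j).mul_const _]
      refine Finset.sum_congr rfl fun j _ => ?_
      rw [integral_mul_const, hc]
    have hrepr : ∫ x, g (w + M x) ∂μ - g w - (∑ i, ∑ j, c i j * Q (M (e i)) (M (e j))) / 2
        = ∫ x, (g (w + M x) - g w - l (M x) - Q (M x) (M x) / 2) ∂μ := by
      have j1 : Integrable (fun x => g (w + M x) - g w) μ := hgi.sub (integrable_const _)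
      have j2 : Integrable (fun x => g (w + M x) - g w - l (M x)) μ := j1.sub hli
      rw [integral_sub j2 (hQi.div_const 2), integral_sub j1 hli,
        integral_sub hgi (integrable_const _), hl0, integral_div, hQint]
      simp
    rw [hrepr, ← integral_const_mul, ← Real.norm_eq_abs]
    refine norm_integral_le_of_norm_le (h3.const_mul _) (ae_of_all _ fun x => ?_)
    rw [Real.norm_eq_abs]
    refine (hexp (M x)).trans ?_
    rw [mul_assoc, ← mul_pow]
    gcongr
    exact M.le_opNorm x
  have k1 := key μ₁ c₁ m₁ i₁ hc₁
  have k2 := key μ₂ c₂ m₂ i₂ hc₂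
  have k3 : |∑ i, ∑ j, c₁ i j * Q (M (e i)) (M (e j)) - ∑ i, ∑ j, c₂ i j * Q (M (e i)) (M (e j))|
      ≤ K₂ * ‖M‖ ^ 2 * (∑ i, ∑ j, |c₁ i j - c₂ i j|) := by
    simp_rw [← Finset.sum_sub_distrib, ← sub_mul, Finset.mul_sum]
    refine (Finset.abs_sum_le_sum_abs _ _).trans (Finset.sum_le_sum fun i _ => ?_)
    refine (Finset.abs_sum_le_sum_abs _ _).trans (Finset.sum_le_sum fun j _ => ?_)
    rw [abs_mul, mul_comm]
    gcongr
    have hK : 0 ≤ K₂ := by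
      have := (abs_nonneg _).trans (hQ (e i) (e i))
      simpa [he] using this
    refine (hQ _ _).trans ?_
    rw [sq]
    gcongr
    · simpa [he] using M.le_opNorm (e i)
    · simpa [he] using M.le_opNorm (e j)
  rw [abs_le] at k1 k2 k3 ⊢
  constructor <;> nlinarith

end Gauss

/-! ### Existence and uniqueness of the invariant law -/

section Invariant
open MeasureTheory ProbabilityTheory Filter Topology
open scoped RealInnerProductSpace

variable {E : Type*} [NormedAddCommGroup E] [InnerProductSpace ℝ E] [CompleteSpace E]
  [SecondCountableTopology E] [MeasurableSpace E] [BorelSpace E]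

local notation A "†" => ContinuousLinearMap.adjoint A

/-- The equation satisfied by characteristic functions along one step of the recursion. -/
lemma charFun_step (A : E →L[ℝ] E) (β : ℝ) (π ν : Measure E) [IsProbabilityMeasure π]
    [IsProbabilityMeasure ν] (t : E) :
    charFun ((π.prod ν).map (fun p => A p.1 + β • p.2)) t
      = charFun π ((A †) t) * charFun ν (β • t) := by
  have h1 : IsProbabilityMeasure (π.map A) := Measure.isProbabilityMeasure_map (by fun_prop)
  have h2 : IsProbabilityMeasure (ν.map (fun x => β • x)) :=
    Measure.isProbabilityMeasure_map (by fun_prop)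
  have : (π.prod ν).map (fun p => A p.1 + β • p.2)
      = ((π.map A).prod (ν.map (fun x => β • x))).map (fun p => p.1 + p.2) := by
    rw [Measure.map_prod_map π ν (by fun_prop) (by fun_prop),
      Measure.map_map (by fun_prop) (by fun_prop)]
    rfl
  rw [this, charFun_map_add_prod_eq_mul, Pi.mul_apply, charFun_map_clm, charFun_map_smul]

/-- The autoregressive recursion `Y ↦ A Y + β ξ` with summable powers of `A` has exactly one
invariant law, the law of the series `∑ Aᵏ (β ξₖ)`, and it has a first moment. -/
lemma exists_unique_invariant (A : E →L[ℝ] E) (hA : Summable fun k => ‖A ^ k‖) (β : ℝ)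
    (ν : Measure E) [IsProbabilityMeasure ν] (hν : Integrable (fun x => x) ν) :
    ∃ π : Measure E, IsProbabilityMeasure π ∧ Integrable (fun y => y) π ∧
      (π.prod ν).map (fun p => A p.1 + β • p.2) = π ∧
      ∀ π' : Measure E, IsProbabilityMeasure π' →
        (π'.prod ν).map (fun p => A p.1 + β • p.2) = π' → π' = π := by
  set P : Measure (ℕ → E) := Measure.infinitePi (fun _ => ν) with hP
  let X : ℕ → (ℕ → E) → E := fun k ω => (A ^ k) (β • ω k)
  have hXm : ∀ k, Measurable (X k) := fun k => by fun_prop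
  have hPk : ∀ k, P.map (fun ω => ω k) = ν := fun k => Measure.infinitePi_map_eval _ k
  have hXi : ∀ k, Integrable (X k) P := fun k => by
    have : Integrable (fun x => (A ^ k) (β • x)) (P.map (fun ω => ω k)) := by
      rw [hPk]; exact (A ^ k).integrable_comp (hν.smul β)
    exact this.comp_measurable (by fun_prop)
  have hXn : ∀ k, ∫ ω, ‖X k ω‖ ∂P ≤ ‖A ^ k‖ * (|β| * ∫ x, ‖x‖ ∂ν) := fun k => by
    have e : ∫ ω, ‖X k ω‖ ∂P = ∫ x, ‖(A ^ k) (β • x)‖ ∂ν := by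
      rw [← hPk k, integral_map (measurable_pi_apply k).aemeasurable
        (Continuous.aestronglyMeasurable (by fun_prop))]
    rw [e, ← integral_const_mul, ← integral_const_mul]
    refine integral_mono ((A ^ k).integrable_comp (hν.smul β)).norm
      ((hν.norm.const_mul _).const_mul _) fun x => ?_
    refine ((A ^ k).le_opNorm _).trans (le_of_eq ?_)
    rw [norm_smul, Real.norm_eq_abs]
  have hsum : Summable fun k => ∫ ω, ‖X k ω‖ ∂P :=
    Summable.of_nonneg_of_le (fun k => integral_nonneg fun ω => norm_nonneg _) hXn
      (hA.mul_right _)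
  have hlin : ∫⁻ ω, ∑' k, ‖X k ω‖ₑ ∂P < ⊤ := by
    rw [lintegral_tsum fun k => (hXm k).enorm.aemeasurable]
    have : ∀ k, ∫⁻ ω, ‖X k ω‖ₑ ∂P = ENNReal.ofReal (∫ ω, ‖X k ω‖ ∂P) := fun k =>
      (ofReal_integral_norm_eq_lintegral_enorm (hXi k)).symm
    simp_rw [this]
    rw [← ENNReal.ofReal_tsum_of_nonneg (fun k => integral_nonneg fun ω => norm_nonneg _) hsum]
    exact ENNReal.ofReal_lt_top
  have hae : ∀ᵐ ω ∂P, Summable fun k => X k ω := by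
    filter_upwards [ae_lt_top' (by fun_prop) hlin.ne] with ω hω
    refine Summable.of_norm ?_
    have := ENNReal.summable_toReal hω.ne
    simpa using this
  let Y : (ℕ → E) → E := fun ω => ∑' k, X k ω
  let S : ℕ → (ℕ → E) → E := fun n ω => ∑ k ∈ Finset.range n, X k ω
  have hSY : ∀ᵐ ω ∂P, Tendsto (fun n => S n ω) atTop (𝓝 (Y ω)) := by
    filter_upwards [hae] with ω hω using hω.hasSum.tendsto_sum_nat
  have hYm : AEMeasurable Y P := aemeasurable_of_tendsto_metrizable_ae atTop
    (fun n => by fun_prop) hSY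
  have hYi : Integrable Y P := by
    refine ⟨hYm.aestronglyMeasurable, lt_of_le_of_lt (lintegral_mono fun ω => ?_) hlin⟩
    exact enorm_tsum_le_tsum_enorm
  have hprob : IsProbabilityMeasure (P.map Y) := Measure.isProbabilityMeasure_map hYm
  -- the characteristic function of the candidate is an infinite product
  have hψ : ∀ k t, charFun (P.map (X k)) t = charFun ν (β • ((A †) ^ k) t) := fun k t => by
    have : P.map (X k) = (ν.map (fun x => β • x)).map (A ^ k) := by
      rw [← hPk k, Measure.map_map (by fun_prop) (by fun_prop),
        Measure.map_map (by fun_prop) (by fun_prop)]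
      rfl
    rw [this, charFun_map_clm, charFun_map_smul, ← ContinuousLinearMap.star_eq_adjoint, star_pow,
      ContinuousLinearMap.star_eq_adjoint]
  have hind : iIndepFun X P :=
    iIndepFun_infinitePi (X := fun k x => (A ^ k) (β • x)) (fun k => by fun_prop)
  have hlim : ∀ t, Tendsto (fun n => ∏ k ∈ Finset.range n, charFun ν (β • ((A †) ^ k) t)) atTop
      (𝓝 (charFun (P.map Y) t)) := fun t => by
    have e : ∀ n, ∏ k ∈ Finset.range n, charFun ν (β • ((A †) ^ k) t)
        = ∫ ω, Complex.exp (⟪S n ω, t⟫ * Complex.I) ∂P := fun n => by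
      have h1 := iIndepFun.charFun_map_fun_finsetSum_eq_prod (s := Finset.range n) (X := X)
        (fun k _ => (hXm k).aemeasurable) (hind.restrict _)
      have h2 := congrFun h1 t
      rw [Finset.prod_apply] at h2
      simp_rw [← hψ]
      rw [← h2, charFun_apply, integral_map (by fun_prop) (by fun_prop)]
    simp_rw [e]
    rw [charFun_apply, integral_map hYm (by fun_prop)]
    refine tendsto_integral_of_dominated_convergence (fun _ => 1)
      (fun n => Measurable.aestronglyMeasurable (by fun_prop)) (integrable_const _)
      (fun n => ae_of_all _ fun ω => ?_) ?_
    · rw [Complex.norm_exp_ofReal_mul_I]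
    · filter_upwards [hSY] with ω hω
      have : Continuous fun y : E => Complex.exp (⟪y, t⟫ * Complex.I) := by fun_prop
      exact (this.tendsto _).comp hω
  refine ⟨P.map Y, hprob, ?_, ?_, fun π' hπ' hinv => ?_⟩
  · exact (integrable_map_measure (by fun_prop) hYm).2 hYi
  · have : IsProbabilityMeasure
        (((P.map Y).prod ν).map (fun p => A p.1 + β • p.2)) :=
      Measure.isProbabilityMeasure_map (by fun_prop)
    apply Measure.ext_of_charFun
    ext t
    rw [charFun_step]
    have h1 := (tendsto_add_atTop_iff_nat 1).2 (hlim t)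
    refine tendsto_nhds_unique ?_ h1
    refine ((hlim ((A †) t)).mul_const (charFun ν (β • t))).congr fun n => ?_
    rw [Finset.prod_range_succ']
    simp [pow_succ]
  · have hit : ∀ n t, charFun π' t = charFun π' (((A †) ^ n) t)
        * ∏ k ∈ Finset.range n, charFun ν (β • ((A †) ^ k) t) := by
      intro n t
      induction n with
      | zero => simp
      | succ n ih =>
        rw [ih, Finset.prod_range_succ]
        conv_lhs => rw [← hinv, charFun_step]
        rw [pow_succ' (A †) n, mul_apply_eq_comp]
        ring
    apply Measure.ext_of_charFun
    ext t
    have h0 : Tendsto (fun n => ((A †) ^ n) t) atTop (𝓝 0) := by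
      refine squeeze_zero_norm (a := fun n => ‖A ^ n‖ * ‖t‖) (fun n => ?_) ?_
      · refine (((A †) ^ n).le_opNorm t).trans (le_of_eq ?_)
        rw [← ContinuousLinearMap.star_eq_adjoint, ← star_pow,
          ContinuousLinearMap.star_eq_adjoint, LinearIsometryEquiv.norm_map]
      · simpa using hA.tendsto_atTop_zero.mul_const ‖t‖
    have h1 : Tendsto (fun n => charFun π' (((A †) ^ n) t)) atTop (𝓝 1) := by
      have := (continuous_charFun (μ := π')).tendsto 0
      rw [charFun_zero, probReal_univ] at this
      rw [Complex.ofReal_one] at this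
      exact this.comp h0
    have h2 := h1.mul (hlim t)
    rw [one_mul] at h2
    exact tendsto_nhds_unique (tendsto_const_nhds.congr fun n => hit n t) h2

end Invariant

/-! ### The Lyapunov equation and contraction -/

section Lyapunov
open MeasureTheory ProbabilityTheory Matrix
open scoped MatrixOrder
open scoped RealInnerProductSpace

variable {ι : Type*} [Fintype ι]

local notation "𝔼" => EuclideanSpace ℝ ι
local notation "T" => toEuclideanCLM (𝕜 := ℝ) (n := ι)

/-- The quadratic form of a matrix on Euclidean space. -/
def quad (M : Matrix ι ι ℝ) (x : 𝔼) : ℝ := x.ofLp ⬝ᵥ M *ᵥ x.ofLp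

lemma quad_add (M N : Matrix ι ι ℝ) (x : 𝔼) : quad (M + N) x = quad M x + quad N x := by
  simp [quad, add_mulVec]

lemma quad_sub (M N : Matrix ι ι ℝ) (x : 𝔼) : quad (M - N) x = quad M x - quad N x := by
  simp [quad, sub_mulVec]

lemma quad_smul (a : ℝ) (M : Matrix ι ι ℝ) (x : 𝔼) : quad (a • M) x = a * quad M x := by
  simp [quad, smul_mulVec]

lemma posSemidef_of_quad {M : Matrix ι ι ℝ} (hM : M.IsHermitian) (h : ∀ x, 0 ≤ quad M x) :
    M.PosSemidef :=
  PosSemidef.of_dotProduct_mulVec_nonneg hM fun x => h (WithLp.toLp 2 x)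

lemma quad_nonneg {M : Matrix ι ι ℝ} (hM : M.PosSemidef) (x : 𝔼) : 0 ≤ quad M x :=
  hM.dotProduct_mulVec_nonneg x.ofLp

/-- A positive semidefinite solution of the Lyapunov equation with positive definite source is
positive definite: on its kernel the source would vanish. -/
lemma posDef_of_lyapunov {B S SY : Matrix ι ι ℝ} (hS : S.PosDef) (hSY : SY.PosSemidef)
    (hL : B * SY + SY * Bᵀ + S = 0) : SY.PosDef := by
  refine PosDef.of_dotProduct_mulVec_pos hSY.1 fun x hx => ?_
  refine lt_of_le_of_ne (hSY.dotProduct_mulVec_nonneg x) fun h0 => ?_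
  have h1 : SY *ᵥ x = 0 := (hSY.dotProduct_mulVec_zero_iff x).1 h0.symm
  have h2 : star x ⬝ᵥ (B * SY + SY * Bᵀ + S) *ᵥ x = 0 := by rw [hL]; simp
  have hsymm : SYᵀ = SY := by simpa using hSY.1.eq
  have h3 : x ᵥ* SY = 0 := by rw [← mulVec_transpose, hsymm, h1]
  have h4 := hS.dotProduct_mulVec_pos hx
  rw [add_mulVec, add_mulVec, ← mulVec_mulVec, h1, dotProduct_add, dotProduct_add,
    ← mulVec_mulVec, dotProduct_mulVec (star x) SY, star_trivial, h3] at h2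
  simp at h2
  rw [star_trivial] at h4
  exact h4.ne' h2

variable [DecidableEq ι]

lemma quad_eq_inner (M : Matrix ι ι ℝ) (x : 𝔼) : quad M x = ⟪x, T M x⟫ := by
  rw [EuclideanSpace.inner_eq_star_dotProduct, ofLp_toEuclideanCLM, star_trivial, dotProduct_comm]
  rfl

lemma quad_one (x : 𝔼) : quad (1 : Matrix ι ι ℝ) x = ‖x‖ ^ 2 := by
  rw [quad_eq_inner, map_one, ← real_inner_self_eq_norm_sq]; rfl

lemma quad_transpose_apply (M C : Matrix ι ι ℝ) (x : 𝔼) :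
    quad C (T Mᵀ x) = quad (M * C * Mᵀ) x := quad_congr M C x

lemma quad_le (M : Matrix ι ι ℝ) : ∃ K : ℝ, 0 < K ∧ ∀ x : 𝔼, quad M x ≤ K * ‖x‖ ^ 2 := by
  refine ⟨‖T M‖ + 1, by positivity, fun x => ?_⟩
  rw [quad_eq_inner]
  have h1 := real_inner_le_norm x (T M x)
  have h2 := (T M).le_opNorm x
  nlinarith [norm_nonneg x, mul_le_mul_of_nonneg_left h2 (norm_nonneg x)]

lemma le_quad {M : Matrix ι ι ℝ} (hM : M.PosDef) :
    ∃ l : ℝ, 0 < l ∧ ∀ x : 𝔼, l * ‖x‖ ^ 2 ≤ quad M x := by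
  obtain ⟨N, rfl⟩ := CStarAlgebra.nonneg_iff_eq_star_mul_self.1
    (Matrix.nonneg_iff_posSemidef.2 hM.posSemidef)
  have hN : IsUnit N.det := by
    have := hM.det_pos
    rw [det_mul] at this
    exact isUnit_iff_ne_zero.2 (right_ne_zero_of_mul this.ne')
  refine ⟨((‖T N⁻¹‖ + 1) ^ 2)⁻¹, by positivity, fun x => ?_⟩
  have h1 : quad (star N * N) x = ‖T N x‖ ^ 2 := by
    have := quad_transpose_apply (star N) 1 x
    rw [quad_one, mul_one, star_eq_conjTranspose, conjTranspose_eq_transpose_of_trivial,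
      transpose_transpose] at this
    rw [this, star_eq_conjTranspose, conjTranspose_eq_transpose_of_trivial]
  have h2 : x = T N⁻¹ (T N x) := by
    rw [← mul_apply_eq_comp, ← map_mul, nonsing_inv_mul N hN, map_one]; rfl
  have h3 : ‖x‖ ≤ (‖T N⁻¹‖ + 1) * ‖T N x‖ := by
    conv_lhs => rw [h2]
    refine ((T N⁻¹).le_opNorm _).trans ?_
    gcongr
    linarith
  rw [h1, inv_mul_le_iff₀ (by positivity), ← mul_pow]
  gcongr

/-- The discretised Lyapunov equation. The covariance `SY` is exactly stationary for the step
`1 + α B` when the noise covariance `S` is corrected by `α B SY Bᵀ`. -/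
lemma discrete_lyapunov {B S SY : Matrix ι ι ℝ} (hL : B * SY + SY * Bᵀ + S = 0) (α : ℝ) :
    (1 + α • B) * SY * (1 + α • B)ᵀ + α • (S - α • (B * SY * Bᵀ)) = SY := by
  have : S = -(B * SY + SY * Bᵀ) := (neg_eq_of_add_eq_zero_right hL).symm
  rw [this]
  simp only [transpose_add, transpose_one, transpose_smul, add_mul, mul_add, one_mul, mul_one,
    smul_mul_assoc, mul_smul_comm, smul_sub, smul_neg, smul_add, smul_smul]
  abel

/-- Contraction in the norm defined by `SY`. For small `α`, the covariance accumulated over `n`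
steps dominates `l (1 - (1 - c α)ⁿ)` times the identity, which quantifies the available smoothing. -/
lemma exists_contraction {B S SY : Matrix ι ι ℝ} (hS : S.PosDef) (hSY : SY.PosSemidef)
    (hL : B * SY + SY * Bᵀ + S = 0) :
    ∃ c l κ α₀ : ℝ, 0 < c ∧ 0 < l ∧ 0 < κ ∧ 0 < α₀ ∧ ∀ α ∈ Set.Ioo 0 α₀,
      c * α < 1 ∧ (S - α • (B * SY * Bᵀ)).PosSemidef ∧ ∀ n : ℕ,
        ‖T ((1 + α • B) ^ n)‖ ≤ κ * √(1 - c * α) ^ n ∧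
        (SY - (1 + α • B) ^ n * SY * ((1 + α • B) ^ n)ᵀ
          - (l * (1 - (1 - c * α) ^ n)) • (1 : Matrix ι ι ℝ)).PosSemidef := by
  obtain ⟨l, hl, hlq⟩ := le_quad (posDef_of_lyapunov hS hSY hL)
  obtain ⟨L, hLp, hLq⟩ := quad_le SY
  obtain ⟨s, hs, hsq⟩ := le_quad hS
  obtain ⟨K, hK, hKq⟩ := quad_le (B * SY * Bᵀ)
  set c := s / (2 * L) with hc
  have hcp : 0 < c := by positivity
  refine ⟨c, l, √(L / l), min (s / (2 * K)) (1 / c), hcp, hl, by positivity, by positivity,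
    fun α hα => ?_⟩
  obtain ⟨hα0, hα1⟩ := hα
  rw [lt_min_iff, lt_div_iff₀ (by positivity), lt_div_iff₀ hcp] at hα1
  set A := 1 + α • B with hA
  have hρ : 0 ≤ 1 - c * α := by nlinarith
  have hSq : ∀ x : 𝔼, c * quad SY x ≤ quad (S - α • (B * SY * Bᵀ)) x := fun x => by
    rw [quad_sub, quad_smul]
    have h1 := hsq x
    have h2 := mul_le_mul_of_nonneg_left (hKq x) hα0.le
    have h3 := mul_le_mul_of_nonneg_left (hLq x) hcp.le
    have h4 : c * (L * ‖x‖ ^ 2) = s / 2 * ‖x‖ ^ 2 := by rw [hc]; field_simp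
    nlinarith [sq_nonneg ‖x‖]
  have hstep : ∀ x : 𝔼, quad (A * SY * Aᵀ) x ≤ (1 - c * α) * quad SY x := fun x => by
    have h1 := congrArg (fun M => quad M x) (discrete_lyapunov hL α)
    simp only [quad_add, quad_smul] at h1
    rw [← hA] at h1
    nlinarith [hSq x]
  have hpow : ∀ (n : ℕ) (x : 𝔼), quad (A ^ n * SY * (A ^ n)ᵀ) x ≤ (1 - c * α) ^ n * quad SY x := by
    intro n
    induction n with
    | zero => intro x; simp
    | succ n ih =>
      intro x
      have e : A ^ (n + 1) * SY * (A ^ (n + 1))ᵀ = A ^ n * (A * SY * Aᵀ) * (A ^ n)ᵀ := by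
        rw [pow_succ, transpose_mul]; simp only [mul_assoc]
      rw [e, ← quad_transpose_apply, pow_succ', mul_assoc (1 - c * α)]
      refine (hstep _).trans (mul_le_mul_of_nonneg_left ?_ hρ)
      rw [quad_transpose_apply]
      exact ih x
  have hsm : ∀ (a : ℝ) {M : Matrix ι ι ℝ}, M.IsHermitian → (a • M).IsHermitian := fun a M hM => by
    rw [IsHermitian, conjTranspose_smul, hM.eq, star_trivial]
  have hherm : ∀ M : Matrix ι ι ℝ, (M * SY * Mᵀ).IsHermitian := fun M => by
    simpa using (hSY.mul_mul_conjTranspose_same M).1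
  refine ⟨by linarith [hα1.2], ?_, fun n => ⟨?_, ?_⟩⟩
  · refine posSemidef_of_quad (hS.1.sub (hsm α (hherm B))) fun x => ?_
    exact (mul_nonneg hcp.le (quad_nonneg hSY x)).trans (hSq x)
  · rw [← LinearIsometryEquiv.norm_map ContinuousLinearMap.adjoint, adjoint_toEuclideanCLM]
    refine ContinuousLinearMap.opNorm_le_bound _ (by positivity) fun x => ?_
    refine abs_le_of_sq_le_sq' ?_ (by positivity) |>.2
    have h1 := hlq (T (A ^ n)ᵀ x)
    rw [quad_transpose_apply] at h1
    have h2 := (h1.trans (hpow n x)).trans (mul_le_mul_of_nonneg_left (hLq x) (pow_nonneg hρ n))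
    rw [mul_pow, mul_pow, Real.sq_sqrt (by positivity), ← pow_mul, mul_comm n 2, pow_mul,
      Real.sq_sqrt hρ]
    rw [div_mul_eq_mul_div, div_mul_eq_mul_div, le_div_iff₀ hl]
    linarith
  · refine posSemidef_of_quad ((hSY.1.sub (hherm _)).sub
      (hsm _ isHermitian_one)) fun x => ?_
    rw [quad_sub, quad_sub, quad_smul, quad_one]
    have h1 := hpow n x
    have h2 : (1 - c * α) ^ n ≤ 1 := pow_le_one₀ hρ (by nlinarith)
    have h3 := mul_le_mul_of_nonneg_left (hlq x) (sub_nonneg.2 h2)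
    linarith

end Lyapunov

/-! ### Moments, summation of errors and telescoping -/

section Moments
open MeasureTheory ProbabilityTheory Matrix
open scoped RealInnerProductSpace MatrixOrder

variable {ι : Type*} [Fintype ι] [DecidableEq ι]

local notation "𝔼" => EuclideanSpace ℝ ι
local notation "T" => toEuclideanCLM (𝕜 := ℝ) (n := ι)

lemma integral_mul_multivariateGaussian {C : Matrix ι ι ℝ} (hC : C.PosSemidef) (i j : ι) :
    ∫ x : 𝔼, x i * x j ∂(multivariateGaussian 0 C) = C i j := by
  have hm : ∀ i, ∫ x : 𝔼, x i ∂(multivariateGaussian 0 C) = 0 := fun i => by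
    have := ContinuousLinearMap.integral_comp_comm (EuclideanSpace.proj (𝕜 := ℝ) i)
      (IsGaussian.integrable_fun_id (μ := multivariateGaussian (0 : 𝔼) C))
    rw [integral_id_multivariateGaussian, map_zero] at this
    exact this
  rw [← covariance_eval_multivariateGaussian (μ := 0) hC i j, covariance]
  simp [hm]

/-- Moments of a centered Gaussian law are controlled by the size of its covariance. -/
lemma integral_norm_pow_multivariateGaussian_le {C : Matrix ι ι ℝ} (hC : C.PosSemidef) {K : ℝ}
    (hK : 0 ≤ K) (h : ∀ x : 𝔼, quad C x ≤ K * ‖x‖ ^ 2) (p : ℕ) :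
    ∫ x : 𝔼, ‖x‖ ^ p ∂(multivariateGaussian 0 C) ≤ √K ^ p * ∫ x : 𝔼, ‖x‖ ^ p ∂(stdGaussian 𝔼) := by
  rw [multivariateGaussian, integral_map (by fun_prop) (by fun_prop), ← integral_const_mul]
  have hi : Integrable (fun x : 𝔼 => ‖x‖ ^ p) (stdGaussian 𝔼) := by
    have := (IsGaussian.memLp_id (stdGaussian 𝔼) p (by simp)).integrable_norm_pow'
    simpa using this
  refine integral_mono_of_nonneg (Filter.Eventually.of_forall fun x => by positivity)
    (hi.const_mul _) (Filter.Eventually.of_forall fun x => ?_)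
  have hs : (CFC.sqrt C)ᵀ = CFC.sqrt C := by
    have := (CFC.sqrt_nonneg C).isSelfAdjoint
    rwa [isSelfAdjoint_iff, star_eq_conjTranspose, conjTranspose_eq_transpose_of_trivial] at this
  have h1 : ‖T (CFC.sqrt C) x‖ ^ 2 = quad C x := by
    have := quad_transpose_apply (CFC.sqrt C) 1 x
    rwa [quad_one, mul_one, hs, CFC.sqrt_mul_sqrt_self _ hC.nonneg] at this
  have h2 : ‖T (CFC.sqrt C) x‖ ≤ √K * ‖x‖ := by
    refine abs_le_of_sq_le_sq' ?_ (by positivity) |>.2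
    rw [h1, mul_pow, Real.sq_sqrt hK]
    exact h x
  change ‖0 + T (CFC.sqrt C) x‖ ^ p ≤ √K ^ p * ‖x‖ ^ p
  rw [zero_add, ← mul_pow]
  gcongr

end Moments

section Series

/-- The series left over from summing the one-step errors is of order `x⁻¹ log x⁻¹`. -/
lemma sum_pow_div_le {x : ℝ} (hx : 0 < x) (hx1 : x < 1) (N : ℕ) :
    ∑ n ∈ Finset.range N, (1 - x) ^ (n + 1) / (1 - (1 - x) ^ (n + 1)) ≤ x⁻¹ * (1 - Real.log x) := by
  set r := 1 - x with hr
  have hr0 : 0 < r := by linarith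
  have hr1 : r < 1 := by linarith
  have hterm : ∀ n : ℕ, r ^ (n + 1) / (1 - r ^ (n + 1))
      ≤ r ^ n + x⁻¹ * (r ^ (n + 1) / ((n : ℝ) + 1)) := by
    intro n
    have hp : 0 < r ^ (n + 1) := by positivity
    have hlt : r ^ (n + 1) < 1 := pow_lt_one₀ hr0.le hr1 (by simp)
    -- Bernoulli's inequality, from `(1 - x) * (1 + x) ≤ 1`
    have hb : r ^ (n + 1) * (1 + (n + 1) * x) ≤ 1 := by
      have h1 : 1 + ((n + 1 : ℕ) : ℝ) * x ≤ (1 + x) ^ (n + 1) :=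
        one_add_mul_le_pow (by linarith) _
      push_cast at h1
      calc r ^ (n + 1) * (1 + (n + 1) * x) ≤ r ^ (n + 1) * (1 + x) ^ (n + 1) := by gcongr
        _ = (r * (1 + x)) ^ (n + 1) := (mul_pow _ _ _).symm
        _ ≤ 1 := pow_le_one₀ (by positivity) (by nlinarith)
    have hle : r ^ (n + 1) ≤ r ^ n := pow_le_pow_of_le_one hr0.le hr1.le (by simp)
    have hn : (0 : ℝ) < (n : ℝ) + 1 := by positivity
    refine le_trans ?_ (add_le_add_left hle _)
    rw [div_le_iff₀ (by linarith)]
    have e : r ^ (n + 1) + x⁻¹ * (r ^ (n + 1) / ((n : ℝ) + 1))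
        = r ^ (n + 1) * (1 + (n + 1) * x) / ((n + 1) * x) := by field_simp; ring
    rw [e, div_mul_eq_mul_div, le_div_iff₀ (by positivity)]
    nlinarith
  have hg : HasSum (fun n : ℕ => r ^ n) x⁻¹ := by
    have := hasSum_geometric_of_lt_one hr0.le hr1
    rwa [hr, sub_sub_cancel] at this
  have hl : HasSum (fun n : ℕ => r ^ (n + 1) / ((n : ℝ) + 1)) (-Real.log x) := by
    have := Real.hasSum_pow_div_log_of_abs_lt_one (x := r) (by rw [abs_of_pos hr0]; exact hr1)
    rwa [hr, sub_sub_cancel] at this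
  have hs := hg.add (hl.mul_left x⁻¹)
  calc _ ≤ ∑ n ∈ Finset.range N, (r ^ n + x⁻¹ * (r ^ (n + 1) / ((n : ℝ) + 1))) :=
        Finset.sum_le_sum fun n _ => hterm n
    _ ≤ x⁻¹ + x⁻¹ * -Real.log x := sum_le_hasSum _ (fun n _ => by positivity) hs
    _ = _ := by ring

end Series

section Telescope
open MeasureTheory ProbabilityTheory Matrix Filter Topology
open scoped RealInnerProductSpace

variable {ι : Type*} [Fintype ι] [DecidableEq ι]

local notation "𝔼" => EuclideanSpace ℝ ι
local notation "T" => toEuclideanCLM (𝕜 := ℝ) (n := ι)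

/-- The covariance accumulated by the Gaussian chain with step `A` and stationary covariance `SY`
after `n` steps started at a point. -/
def accCov (A SY : Matrix ι ι ℝ) (n : ℕ) : Matrix ι ι ℝ := SY - A ^ n * SY * (A ^ n)ᵀ

/-- The function `h` averaged over the `n`-step noise of the Gaussian chain. -/
noncomputable def smooth (h : 𝔼 → ℝ) (A SY : Matrix ι ι ℝ) (n : ℕ) (z : 𝔼) : ℝ :=
  ∫ x, h (z + x) ∂(multivariateGaussian 0 (accCov A SY n))

lemma lipschitz_smooth {h : 𝔼 → ℝ} (hh : LipschitzWith 1 h) (A SY : Matrix ι ι ℝ) (n : ℕ) :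
    LipschitzWith 1 (smooth h A SY n) :=
  lipschitz_integral_add hh IsGaussian.integrable_fun_id

lemma smooth_zero (h : 𝔼 → ℝ) (A SY : Matrix ι ι ℝ) : smooth h A SY 0 = h := by
  funext z
  have : accCov A SY 0 = 0 := by simp [accCov]
  rw [smooth, this]
  simp [multivariateGaussian]

/-- Replacing the chain's noise `ν` by the Gaussian noise at one more step costs at most the
discrepancy `D` between the two noises on the smoothed test function. -/
lemma abs_integral_smooth_sub_le {h : 𝔼 → ℝ} (hh : LipschitzWith 1 h) {A C SY : Matrix ι ι ℝ}
    {α : ℝ} (hα : 0 ≤ α) (hC : C.PosSemidef) (hA : A * SY * Aᵀ + α • C = SY) {n : ℕ}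
    (hV : (accCov A SY n).PosSemidef) {π ν : Measure 𝔼} [IsProbabilityMeasure π]
    [IsProbabilityMeasure ν] (hπ : Integrable (fun y => y) π) (hν : Integrable (fun y => y) ν)
    (hinv : (π.prod ν).map (fun p => T A p.1 + √α • p.2) = π) {D : ℝ}
    (hD : ∀ w, |∫ x, smooth h A SY n (w + T (√α • A ^ n) x) ∂ν
      - ∫ x, smooth h A SY n (w + T (√α • A ^ n) x) ∂(multivariateGaussian 0 C)| ≤ D) :
    |∫ y, smooth h A SY n (T (A ^ n) y) ∂π
      - ∫ y, smooth h A SY (n + 1) (T (A ^ (n + 1)) y) ∂π| ≤ D := by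
  set g := smooth h A SY n with hg
  have hgL : LipschitzWith 1 g := lipschitz_smooth hh A SY n
  set M := T (√α • A ^ n) with hM
  have hGi : Integrable (fun x => M x) (multivariateGaussian 0 C) :=
    M.integrable_comp IsGaussian.integrable_fun_id
  have hνi : Integrable (fun x => M x) ν := M.integrable_comp hν
  have hyi : Integrable (fun y => T (A ^ (n + 1)) y) π :=
    ContinuousLinearMap.integrable_comp _ hπ
  have hcov : accCov A SY (n + 1)
      = (√α • A ^ n) * C * (√α • A ^ n)ᵀ + accCov A SY n := by
    have e : A ^ (n + 1) * SY * (A ^ (n + 1))ᵀ = A ^ n * (A * SY * Aᵀ) * (A ^ n)ᵀ := by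
      rw [pow_succ, transpose_mul]; simp only [mul_assoc]
    rw [accCov, accCov, e, eq_sub_of_add_eq hA, transpose_smul]
    simp only [mul_sub, sub_mul, smul_mul_assoc, mul_smul_comm, smul_smul, Real.mul_self_sqrt hα]
    abel
  have h1 : ∀ y, smooth h A SY (n + 1) (T (A ^ (n + 1)) y)
      = ∫ x, g (T (A ^ (n + 1)) y + M x) ∂(multivariateGaussian 0 C) := fun y => by
    rw [smooth, hcov, integral_add_conv hh hC hV]
    rfl
  have h2 : ∫ y, g (T (A ^ n) y) ∂π = ∫ y, ∫ x, g (T (A ^ (n + 1)) y + M x) ∂ν ∂π := by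
    conv_lhs => rw [← hinv]
    have hgm : Continuous fun y => g (T (A ^ n) y) := hgL.continuous.comp (T (A ^ n)).continuous
    rw [integral_map (by fun_prop) hgm.aestronglyMeasurable]
    have e : ∀ p : 𝔼 × 𝔼, T (A ^ n) (T A p.1 + √α • p.2) = T (A ^ (n + 1)) p.1 + M p.2 := by
      intro p
      rw [map_add, pow_succ, map_mul, hM]
      simp
    simp_rw [e]
    refine integral_prod _ ?_
    have := integrable_lipschitz_add hgL (μ := π.prod ν)
      (X := fun p : 𝔼 × 𝔼 => T (A ^ (n + 1)) p.1 + M p.2)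
      ((hyi.comp_fst ν).add (hνi.comp_snd π)) 0
    simpa using this
  have i1 : Integrable (fun y => ∫ x, g (T (A ^ (n + 1)) y + M x) ∂ν) π := by
    simpa using integrable_lipschitz_add (lipschitz_integral_add hgL hνi) hyi 0
  have i2 : Integrable
      (fun y => ∫ x, g (T (A ^ (n + 1)) y + M x) ∂(multivariateGaussian 0 C)) π := by
    simpa using integrable_lipschitz_add (lipschitz_integral_add hgL hGi) hyi 0
  simp_rw [h1]
  rw [h2, ← integral_sub i1 i2]
  have := norm_integral_le_of_norm_le_const (μ := π) (C := D)
    (f := fun y => ∫ x, g (T (A ^ (n + 1)) y + M x) ∂ν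
      - ∫ x, g (T (A ^ (n + 1)) y + M x) ∂(multivariateGaussian 0 C))
    (ae_of_all _ fun y => by simpa using hD (T (A ^ (n + 1)) y))
  simpa using this

/-- If the one-step errors have partial sums at most `R`, then `π` is within `R` of the Gaussian
law, because both laws are forgotten by the contraction `A ^ N` as `N → ∞`. -/
lemma abs_integral_sub_le_of_steps {h : 𝔼 → ℝ} (hh : LipschitzWith 1 h) {A C SY : Matrix ι ι ℝ}
    {α : ℝ} (hα : 0 ≤ α) (hC : C.PosSemidef) (hSY : SY.PosSemidef)
    (hA : A * SY * Aᵀ + α • C = SY)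
    (hV : ∀ n, (accCov A SY n).PosSemidef) (hlim : Tendsto (fun n => ‖T (A ^ n)‖) atTop (𝓝 0))
    {π ν : Measure 𝔼} [IsProbabilityMeasure π]
    [IsProbabilityMeasure ν] (hπ : Integrable (fun y => y) π) (hν : Integrable (fun y => y) ν)
    (hinv : (π.prod ν).map (fun p => T A p.1 + √α • p.2) = π) {D : ℕ → ℝ}
    (hD : ∀ n w, |∫ x, smooth h A SY n (w + T (√α • A ^ n) x) ∂ν
      - ∫ x, smooth h A SY n (w + T (√α • A ^ n) x) ∂(multivariateGaussian 0 C)| ≤ D n)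
    {R : ℝ} (hR : ∀ N, ∑ n ∈ Finset.range N, D n ≤ R) :
    |∫ y, h y ∂π - ∫ y, h y ∂(multivariateGaussian 0 SY)| ≤ R := by
  set γ := multivariateGaussian (0 : 𝔼) SY with hγ
  have hγi : Integrable (fun y => y) γ := IsGaussian.integrable_fun_id
  set u : ℕ → 𝔼 → ℝ := fun n y => smooth h A SY n (T (A ^ n) y) with hu
  have hu0 : u 0 = h := by funext y; simp [hu, smooth_zero]
  have htel : ∀ N, |∫ y, h y ∂π - ∫ y, u N y ∂π| ≤ R := fun N => by
    refine le_trans ?_ (hR N)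
    have e : ∫ y, h y ∂π - ∫ y, u N y ∂π
        = ∑ n ∈ Finset.range N, (∫ y, u n y ∂π - ∫ y, u (n + 1) y ∂π) := by
      rw [Finset.sum_range_sub' (fun n => ∫ y, u n y ∂π), hu0]
    rw [e]
    exact (Finset.abs_sum_le_sum_abs _ _).trans (Finset.sum_le_sum fun n _ =>
      abs_integral_smooth_sub_le hh hα hC hA (hV n) hπ hν hinv (hD n))
  have hstat : ∀ N, ∫ y, h y ∂γ = ∫ y, u N y ∂γ := fun N => by
    have e : SY = A ^ N * SY * (A ^ N)ᵀ + accCov A SY N := by simp [accCov]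
    have := integral_add_conv hh hSY (hV N) (A ^ N) 0
    rw [← e] at this
    simp only [zero_add] at this
    exact this
  have hu' : ∀ N (μ : Measure 𝔼) [IsProbabilityMeasure μ], Integrable (fun y => y) μ →
      |∫ y, u N y ∂μ - u N 0| ≤ ‖T (A ^ N)‖ * ∫ y, ‖y‖ ∂μ := fun N μ _ hμ => by
    have hi : Integrable (u N) μ := by
      have := integrable_lipschitz_add (lipschitz_smooth hh A SY N)
        ((T (A ^ N)).integrable_comp hμ) 0
      simp only [zero_add] at this
      exact this
    have e : ∫ y, u N y ∂μ - u N 0 = ∫ y, (u N y - u N 0) ∂μ := by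
      rw [integral_sub hi (integrable_const _)]; simp
    rw [e, ← integral_const_mul, ← Real.norm_eq_abs]
    refine norm_integral_le_of_norm_le (hμ.norm.const_mul _) (ae_of_all _ fun y => ?_)
    have := (lipschitz_smooth hh A SY N).dist_le_mul (T (A ^ N) y) (T (A ^ N) 0)
    rw [Real.dist_eq, map_zero, dist_zero_right, NNReal.coe_one, one_mul] at this
    simp only [hu, map_zero, Real.norm_eq_abs]
    exact this.trans ((T (A ^ N)).le_opNorm y)
  have hfin : ∀ N, |∫ y, h y ∂π - ∫ y, h y ∂γ|
      ≤ R + ‖T (A ^ N)‖ * (∫ y, ‖y‖ ∂π + ∫ y, ‖y‖ ∂γ) := fun N => by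
    have h1 := htel N
    have h2 := hu' N π hπ
    have h3 := hu' N γ hγi
    rw [hstat N]
    rw [abs_le] at *
    constructor <;> linarith
  have ht := (tendsto_const_nhds (x := R)).add
    (hlim.mul_const (∫ y, ‖y‖ ∂π + ∫ y, ‖y‖ ∂γ))
  rw [zero_mul, add_zero] at ht
  exact ge_of_tendsto' ht hfin

end Telescope

/-! ### The Wasserstein bound -/

section Wasserstein
open MeasureTheory ProbabilityTheory Matrix Filter Topology
open scoped RealInnerProductSpace

variable {ι : Type*} [Fintype ι]

local notation "𝔼" => EuclideanSpace ℝ ι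
local notation "T" => toEuclideanCLM (𝕜 := ℝ) (n := ι)

lemma memLp_id_of_integrable {ν : Measure 𝔼} (h : Integrable (fun x => ‖x‖ ^ 3) ν) :
    MemLp id 3 ν := by
  have := (integrable_norm_rpow_iff (f := id) (μ := ν) (p := 3) aestronglyMeasurable_id
    (by norm_num) (by norm_num)).1
  exact this (by simpa using h)

/-- The arithmetic turning the second-order expansion into a one-step error bound: `M` stands for
the norm of the noise coefficient, `v` for the smoothing variance `l (1 - q)`. -/
lemma step_arith {C l κ b m α q M v y : ℝ} (hC : 0 < C) (hl : 0 < l) (hκ : 0 < κ) (hb : 0 ≤ b)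
    (hy0 : 0 ≤ y) (hy : y ≤ m) (hα : 0 < α) (hα1 : α ≤ 1) (hq0 : 0 < q) (hq1 : q < 1)
    (hv : v = l * (1 - q)) (hM2 : M ^ 2 ≤ α * κ ^ 2 * q) (hM3 : M ^ 3 ≤ α * √α * κ ^ 3 * q) :
    C / √v * M ^ 2 * (α * b) + C / v * M ^ 3 * y
      ≤ C * (√l * κ ^ 2 * b + κ ^ 3 * m) / l * (α * √α) * (q / (1 - q)) := by
  have hv0 : 0 < v := hv ▸ mul_pos hl (by linarith)
  have hs1 : C / √v ≤ C * √l / v := by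
    rw [div_le_div_iff₀ (Real.sqrt_pos.2 hv0) hv0, mul_assoc]
    refine mul_le_mul_of_nonneg_left ?_ hC.le
    have : √v ≤ √l := Real.sqrt_le_sqrt (by nlinarith)
    calc v = √v * √v := (Real.mul_self_sqrt hv0.le).symm
      _ ≤ √l * √v := by gcongr
  have hαα : α * α ≤ α * √α := by
    refine mul_le_mul_of_nonneg_left ?_ hα.le
    nlinarith [Real.mul_self_sqrt hα.le, Real.sqrt_nonneg α, Real.sqrt_le_one.2 hα1]
  calc C / √v * M ^ 2 * (α * b) + C / v * M ^ 3 * y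
      ≤ C * √l / v * (α * κ ^ 2 * q) * (α * b) + C / v * (α * √α * κ ^ 3 * q) * m := by gcongr
    _ = C * √l / v * κ ^ 2 * q * b * (α * α) + C / v * (α * √α * κ ^ 3 * q) * m := by ring
    _ ≤ C * √l / v * κ ^ 2 * q * b * (α * √α) + C / v * (α * √α * κ ^ 3 * q) * m := by gcongr
    _ = _ := by
      have : (1 : ℝ) - q ≠ 0 := by linarith
      rw [hv]
      field_simp

lemma abs_integral_smul_sub_le {h : 𝔼 → ℝ} (hh : LipschitzWith 1 h) {s : ℝ} (hs : 0 ≤ s) (w : 𝔼)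
    (μ : Measure 𝔼) [IsProbabilityMeasure μ] (hμ : Integrable (fun y => y) μ) :
    |∫ x, h (w + (s • (1 : 𝔼 →L[ℝ] 𝔼)) x) ∂μ - h w| ≤ s * ∫ x, ‖x‖ ∂μ := by
  have hi : Integrable (fun x => h (w + (s • (1 : 𝔼 →L[ℝ] 𝔼)) x)) μ :=
    integrable_lipschitz_add hh ((s • (1 : 𝔼 →L[ℝ] 𝔼)).integrable_comp hμ) w
  have e : ∫ x, h (w + (s • (1 : 𝔼 →L[ℝ] 𝔼)) x) ∂μ - h w
      = ∫ x, (h (w + (s • (1 : 𝔼 →L[ℝ] 𝔼)) x) - h w) ∂μ := by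
    rw [integral_sub hi (integrable_const _)]; simp
  rw [e, ← integral_const_mul, ← Real.norm_eq_abs]
  refine norm_integral_le_of_norm_le (hμ.norm.const_mul _) (ae_of_all _ fun x => ?_)
  have := hh.dist_le_mul (w + (s • (1 : 𝔼 →L[ℝ] 𝔼)) x) w
  simpa [Real.dist_eq, norm_smul, abs_of_nonneg hs] using this

variable [DecidableEq ι]

set_option maxHeartbeats 1000000 in
/-- The one-step errors given by the smoothed test functions are summed along the telescoping sum.
The summability of the powers of the step is included because the invariant law depends on it. -/
lemma exists_wasserstein_bound {B S SY : Matrix ι ι ℝ} (hS : S.PosDef) (hSY : SY.PosSemidef)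
    (hL : B * SY + SY * Bᵀ + S = 0) (ν : Measure 𝔼) [IsProbabilityMeasure ν]
    (hmean : ∫ x, x ∂ν = 0) (hcov : ∀ i j, ∫ x, x i * x j ∂ν = S i j) (hν3 : MemLp id 3 ν) :
    ∃ α' U : ℝ, 0 < α' ∧ α' ≤ Real.exp (-1) ∧ 0 ≤ U ∧ ∀ α ∈ Set.Ioo 0 α',
      (Summable fun k => ‖T (1 + α • B) ^ k‖) ∧
      ∀ π : Measure 𝔼, IsProbabilityMeasure π → Integrable (fun y => y) π →
        (π.prod ν).map (fun p => T (1 + α • B) p.1 + √α • p.2) = π →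
        ∀ h : 𝔼 → ℝ, LipschitzWith 1 h →
          |∫ y, h y ∂π - ∫ y, h y ∂(multivariateGaussian 0 SY)| ≤ U * (√α * Real.log (1 / α)) := by
  obtain ⟨c, l, κ, α₀, hc, hl, hκ, hα₀, H⟩ := exists_contraction hS hSY hL
  obtain ⟨K, hK, hKq⟩ := quad_le S
  obtain ⟨C, hC, HC⟩ := exists_hasExpansion_multivariateGaussian (ι := ι)
  have hν1 : Integrable (fun x : 𝔼 => x) ν := hν3.integrable (by norm_num)
  set b : ℝ := ∑ i, ∑ j, |(B * SY * Bᵀ) i j| with hb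
  have hb0 : 0 ≤ b := Finset.sum_nonneg fun i _ => Finset.sum_nonneg fun j _ => abs_nonneg _
  set m₁ : ℝ := ∫ x, ‖x‖ ∂ν + √K * ∫ x : 𝔼, ‖x‖ ∂(stdGaussian 𝔼) with hm₁
  set m₃ : ℝ := ∫ x, ‖x‖ ^ 3 ∂ν + √K ^ 3 * ∫ x : 𝔼, ‖x‖ ^ 3 ∂(stdGaussian 𝔼) with hm₃
  have hm₁0 : 0 ≤ m₁ := by positivity
  have hm₃0 : 0 ≤ m₃ := by positivity
  set F : ℝ := C * (√l * κ ^ 2 * b + κ ^ 3 * m₃) / l with hF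
  have hF0 : 0 ≤ F := by positivity
  refine ⟨min α₀ (Real.exp (-1)), m₁ + F / c * (2 + |Real.log c|),
    lt_min hα₀ (Real.exp_pos _), min_le_right _ _, by positivity, fun α hα => ?_⟩
  have hα0 : 0 < α := hα.1
  have hαe : α < Real.exp (-1) := hα.2.trans_le (min_le_right _ _)
  have hα1 : α < 1 := hαe.trans (by simp)
  obtain ⟨hcα, hPS, Hn⟩ := H α ⟨hα.1, hα.2.trans_le (min_le_left _ _)⟩
  set A := 1 + α • B with hA
  set r := 1 - c * α with hr
  have hr0 : 0 < r := by linarith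
  have hr1 : r < 1 := by nlinarith
  have hsr0 : 0 < √r := Real.sqrt_pos.2 hr0
  have hsr1 : √r < 1 := by rw [Real.sqrt_lt' one_pos]; linarith
  have hgeo : Summable fun k => κ * √r ^ k :=
    (summable_geometric_of_lt_one hsr0.le hsr1).mul_left κ
  refine ⟨Summable.of_nonneg_of_le (fun k => norm_nonneg _)
    (fun k => by rw [← map_pow]; exact (Hn k).1) hgeo, fun π hπp hπ hinv h hh => ?_⟩
  have hlim : Tendsto (fun n => ‖T (A ^ n)‖) atTop (𝓝 0) :=
    squeeze_zero (fun n => norm_nonneg _) (fun n => (Hn n).1) hgeo.tendsto_atTop_zero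
  set Sα := S - α • (B * SY * Bᵀ) with hSα
  have hV : ∀ n, (accCov A SY n).PosSemidef := fun n => by
    have h1 : 0 ≤ l * (1 - r ^ n) :=
      mul_nonneg hl.le (sub_nonneg.2 (pow_le_one₀ hr0.le hr1.le))
    have h2 := (Hn n).2.add (PosSemidef.one.smul h1)
    rwa [sub_add_cancel] at h2
  have hq : ∀ x : 𝔼, quad Sα x ≤ K * ‖x‖ ^ 2 := fun x => by
    have h1 : 0 ≤ quad (B * SY * Bᵀ) x :=
      quad_nonneg (by simpa using hSY.mul_mul_conjTranspose_same B) x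
    rw [hSα, quad_sub, quad_smul]
    nlinarith [hKq x]
  set γα := multivariateGaussian (0 : 𝔼) Sα with hγα
  have hγi : Integrable (fun x : 𝔼 => x) γα := IsGaussian.integrable_fun_id
  have hγ1 : ∫ x, ‖x‖ ∂γα ≤ √K * ∫ x : 𝔼, ‖x‖ ∂(stdGaussian 𝔼) := by
    simpa using integral_norm_pow_multivariateGaussian_le hPS hK.le hq 1
  have hγ3 := integral_norm_pow_multivariateGaussian_le hPS hK.le hq 3
  -- bound on the one-step errors; for `n = 0` there is no smoothing yet
  set D : ℕ → ℝ := fun n => if n = 0 then √α * m₁ else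
    F * (α * √α) * (r ^ n / (1 - r ^ n)) with hD
  have hsα : 0 < √α := Real.sqrt_pos.2 hα0
  have hsα1 : √α ≤ 1 := Real.sqrt_le_one.2 hα1.le
  have hss : √α * √α = α := Real.mul_self_sqrt hα0.le
  have hDn : ∀ n w, |∫ x, smooth h A SY n (w + T (√α • A ^ n) x) ∂ν
      - ∫ x, smooth h A SY n (w + T (√α • A ^ n) x) ∂γα| ≤ D n := by
    intro n w
    rcases Nat.eq_zero_or_pos n with rfl | hn
    · simp only [smooth_zero, pow_zero, hD, if_true, map_smul, map_one]
      have k1 := abs_integral_smul_sub_le hh hsα.le w ν hν1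
      have k2 := abs_integral_smul_sub_le hh hsα.le w γα hγi
      have k3 := mul_le_mul_of_nonneg_left hγ1 hsα.le
      rw [hm₁, mul_add]
      rw [abs_le] at k1 k2 ⊢
      constructor <;> linarith
    · simp only [hD, hn.ne', if_false]
      have hrn : r ^ n < 1 := pow_lt_one₀ hr0.le hr1 hn.ne'
      set v := l * (1 - r ^ n) with hv
      have hv0 : 0 < v := mul_pos hl (by linarith)
      have hvs : √v ^ 2 = v := Real.sq_sqrt hv0.le
      have hexp := HC h hh (√v) (accCov A SY n) (Real.sqrt_pos.2 hv0)
        (by rw [hvs]; exact (Hn n).2) w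
      rw [hvs] at hexp
      have hmain := HasExpansion.integral_sub_le hexp (lipschitz_smooth hh A SY n)
        (T (√α • A ^ n)) hmean integral_id_multivariateGaussian hν3
        (by simpa using IsGaussian.memLp_id γα 3 (by simp)) hcov
        (integral_mul_multivariateGaussian hPS) (by positivity)
      refine hmain.trans ?_
      have hM : ‖T (√α • A ^ n)‖ ≤ √α * (κ * √r ^ n) := by
        rw [map_smul, norm_smul, Real.norm_of_nonneg hsα.le]
        exact mul_le_mul_of_nonneg_left (Hn n).1 hsα.le
      have hrr : (√r ^ n) ^ 2 = r ^ n := by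
        rw [← pow_mul, mul_comm n 2, pow_mul, Real.sq_sqrt hr0.le]
      have hM2 : ‖T (√α • A ^ n)‖ ^ 2 ≤ α * κ ^ 2 * r ^ n := by
        calc ‖T (√α • A ^ n)‖ ^ 2 ≤ (√α * (κ * √r ^ n)) ^ 2 := by gcongr
          _ = (√α * √α) * κ ^ 2 * (√r ^ n) ^ 2 := by ring
          _ = α * κ ^ 2 * r ^ n := by rw [hss, hrr]
      have hM3 : ‖T (√α • A ^ n)‖ ^ 3 ≤ α * √α * κ ^ 3 * r ^ n := by
        calc ‖T (√α • A ^ n)‖ ^ 3 ≤ (√α * (κ * √r ^ n)) ^ 3 := by gcongr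
          _ = (√α * √α) * √α * κ ^ 3 * (√r ^ n) ^ 2 * √r ^ n := by ring
          _ = α * √α * κ ^ 3 * r ^ n * √r ^ n := by rw [hss, hrr]
          _ ≤ α * √α * κ ^ 3 * r ^ n * 1 := by
              gcongr
              exact pow_le_one₀ hsr0.le hsr1.le
          _ = _ := by ring
      have hcd : ∑ i, ∑ j, |S i j - Sα i j| = α * b := by
        simp [hSα, hb, Finset.mul_sum, abs_mul, abs_of_pos hα0]
      rw [hcd]
      exact step_arith hC hl hκ hb0 (by positivity) (add_le_add_right hγ3 _) hα0 hα1.le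
        (by positivity) hrn hv hM2 hM3
  set R := √α * m₁ + F * (α * √α) * ((c * α)⁻¹ * (1 - Real.log (c * α))) with hR
  have hcα0 : 0 < c * α := by positivity
  have hlogc : Real.log (c * α) < 0 := Real.log_neg hcα0 hcα
  have hRN : ∀ N, ∑ n ∈ Finset.range N, D n ≤ R := by
    intro N
    rcases N with _ | N
    · have : 0 ≤ (c * α)⁻¹ * (1 - Real.log (c * α)) :=
        mul_nonneg (by positivity) (by linarith)
      rw [Finset.sum_range_zero, hR]
      positivity
    · rw [Finset.sum_range_succ', add_comm]
      simp only [hD, if_true, Nat.succ_ne_zero, if_false, ← Finset.mul_sum, hR]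
      gcongr
      exact sum_pow_div_le hcα0 hcα N
  have hfin := abs_integral_sub_le_of_steps hh hα0.le hPS hSY (discrete_lyapunov hL α) hV hlim
    hπ hν1 hinv hDn hRN
  refine hfin.trans ?_
  have hlog1 : 1 ≤ Real.log (1 / α) := by
    rw [one_div, Real.log_inv]
    have := Real.log_lt_log hα0 hαe
    rw [Real.log_exp] at this
    linarith
  have hR' : R = √α * (m₁ + F / c * (1 - Real.log c + Real.log (1 / α))) := by
    rw [hR, Real.log_mul hc.ne' hα0.ne', one_div, Real.log_inv]
    field_simp
    ring
  rw [hR', mul_left_comm]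
  refine mul_le_mul_of_nonneg_left ?_ hsα.le
  have h1 : 1 - Real.log c + Real.log (1 / α) ≤ (2 + |Real.log c|) * Real.log (1 / α) := by
    have := neg_abs_le (Real.log c)
    nlinarith [abs_nonneg (Real.log c)]
  have h2 := mul_le_mul_of_nonneg_left h1 (div_nonneg hF0 hc.le)
  nlinarith

end Wasserstein

/-! ### Tails of projections -/

section Tail
open MeasureTheory ProbabilityTheory Matrix
open scoped RealInnerProductSpace NNReal

/-- The variance may vanish. Otherwise `exp (-u) ≤ 1 / u` bounds the density at `x` by `√v / x²`,
which stays bounded in `v` near zero, unlike the density at the origin. -/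
lemma gaussianReal_Ioc_le (v : ℝ≥0) {a s ε : ℝ} (ha : 0 < a) (hs : a / 2 ≤ s) (hε : 0 ≤ ε) :
    (gaussianReal 0 v).real (Set.Ioc s (s + ε)) ≤ ε * (4 * √v / a ^ 2) := by
  have hs0 : 0 < s := by linarith
  rcases eq_or_ne v 0 with rfl | hv
  · rw [gaussianReal_zero_var, measureReal_def, Measure.dirac_apply' _ measurableSet_Ioc,
      Set.indicator_of_notMem (by simp [hs0.le])]
    simp
  have hv0 : (0 : ℝ) < v := NNReal.coe_pos.2 (pos_iff_ne_zero.2 hv)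
  have hpdf : ∀ x, s < x → gaussianPDFReal 0 v x ≤ 4 * √v / a ^ 2 := fun x hx => by
    have hx0 : 0 < x := hs0.trans hx
    have h1 : Real.exp (-(x - 0) ^ 2 / (2 * v)) ≤ 2 * v / x ^ 2 := by
      rw [sub_zero, neg_div, Real.exp_neg, ← inv_div (x ^ 2)]
      refine inv_anti₀ (div_pos (pow_pos hx0 2) (mul_pos two_pos hv0)) ?_
      linarith [Real.add_one_le_exp (x ^ 2 / (2 * (v : ℝ)))]
    have h2 : 2 * √v ≤ √(2 * Real.pi * v) := by
      refine Real.le_sqrt_of_sq_le ?_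
      rw [mul_pow, Real.sq_sqrt hv0.le]
      nlinarith [Real.pi_gt_three]
    have hsv : 0 < √(v : ℝ) := Real.sqrt_pos.2 hv0
    calc gaussianPDFReal 0 v x = (√(2 * Real.pi * v))⁻¹ * Real.exp (-(x - 0) ^ 2 / (2 * v)) := rfl
      _ ≤ (2 * √v)⁻¹ * (2 * v / x ^ 2) := by gcongr
      _ = √v / x ^ 2 := by
          rw [← Real.mul_self_sqrt hv0.le, Real.sqrt_mul_self hsv.le]
          field_simp
      _ ≤ √v / (a / 2) ^ 2 := by gcongr; linarith
      _ = _ := by field_simp; ring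
  rw [measureReal_def, gaussianReal_apply _ hv]
  refine ENNReal.toReal_le_of_le_ofReal (by positivity) ?_
  calc ∫⁻ x in Set.Ioc s (s + ε), gaussianPDF 0 v x
      ≤ ∫⁻ _ in Set.Ioc s (s + ε), ENNReal.ofReal (4 * √v / a ^ 2) :=
        setLIntegral_mono measurable_const fun x hx => ENNReal.ofReal_le_ofReal (hpdf x hx.1)
    _ = ENNReal.ofReal (ε * (4 * √v / a ^ 2)) := by
        rw [setLIntegral_const, Real.volume_Ioc, add_sub_cancel_left, mul_comm,
          ENNReal.ofReal_mul hε]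

/-- A ramp of height `ε` between `s` and `s + ε` is `ε` times an approximate indicator of a
half-line; it compares integrals with tail probabilities. -/
lemma ramp_bounds (μ : Measure ℝ) [IsProbabilityMeasure μ] {s ε : ℝ} (hε : 0 ≤ ε) :
    ε * μ.real (Set.Ioi (s + ε)) ≤ ∫ t, min ε (max 0 (t - s)) ∂μ ∧
      ∫ t, min ε (max 0 (t - s)) ∂μ ≤ ε * μ.real (Set.Ioi s) := by
  have hi : Integrable (fun t => min ε (max 0 (t - s))) μ := by
    refine (integrable_const ε).mono' (Continuous.aestronglyMeasurable (by fun_prop))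
      (ae_of_all _ fun t => ?_)
    rw [Real.norm_of_nonneg (le_min hε (le_max_left _ _))]
    exact min_le_left _ _
  have hind : ∀ u : ℝ, Integrable ((Set.Ioi u).indicator fun _ => ε) μ := fun u =>
    (integrable_const ε).indicator measurableSet_Ioi
  have hint : ∀ u : ℝ, ∫ t, (Set.Ioi u).indicator (fun _ => ε) t ∂μ = ε * μ.real (Set.Ioi u) := by
    intro u
    rw [integral_indicator measurableSet_Ioi]
    simp [mul_comm]
  rw [← hint, ← hint]
  constructor
  · refine integral_mono (hind _) hi fun t => ?_
    by_cases ht : t ∈ Set.Ioi (s + ε)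
    · rw [Set.indicator_of_mem ht]
      rw [Set.mem_Ioi] at ht
      exact le_min le_rfl (le_max_of_le_right (by linarith))
    · rw [Set.indicator_of_notMem ht]
      exact le_min hε (le_max_left _ _)
  · refine integral_mono hi (hind _) fun t => ?_
    by_cases ht : t ∈ Set.Ioi s
    · rw [Set.indicator_of_mem ht]
      exact min_le_left _ _
    · rw [Set.indicator_of_notMem ht]
      rw [Set.mem_Ioi, not_lt] at ht
      exact (min_le_right _ _).trans (max_le le_rfl (by linarith))

/-- A Wasserstein bound against a Gaussian law gives tail bounds: the test functions are ramps,
and the Gaussian density is at most of order `a⁻²` beyond `a / 2`. -/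
lemma abs_tail_sub_le (μ : Measure ℝ) [IsProbabilityMeasure μ] (v : ℝ≥0) {W : ℝ}
    (hW : ∀ f : ℝ → ℝ, LipschitzWith 1 f → |∫ t, f t ∂μ - ∫ t, f t ∂(gaussianReal 0 v)| ≤ W)
    {a ε : ℝ} (hε : 0 < ε) (hεa : ε ≤ a / 2) :
    |μ.real (Set.Ioi a) - (gaussianReal 0 v).real (Set.Ioi a)|
      ≤ W / ε + ε * (4 * √v / a ^ 2) := by
  have ha : 0 < a := by linarith
  have hramp : ∀ s : ℝ, LipschitzWith 1 fun t => min ε (max 0 (t - s)) := fun s =>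
    ((LipschitzWith.id.sub (LipschitzWith.const s)).const_max 0 |>.const_min ε).weaken (by simp)
  have hsplit : ∀ s, (gaussianReal 0 v).real (Set.Ioi s)
      = (gaussianReal 0 v).real (Set.Ioi (s + ε))
        + (gaussianReal 0 v).real (Set.Ioc s (s + ε)) := fun s => by
    rw [← measureReal_union _ measurableSet_Ioc, Set.union_comm,
      Set.Ioc_union_Ioi_eq_Ioi (by linarith)]
    exact Set.disjoint_left.2 fun t h1 h2 => not_lt.2 h2.2 h1
  have key : ∀ x y w : ℝ, ε * x ≤ ε * y + w → x - y ≤ w / ε := fun x y w h => by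
    rw [le_div_iff₀ hε]; linarith
  have u1 := (ramp_bounds μ (s := a - ε) hε.le).1
  have u2 := (ramp_bounds (gaussianReal 0 v) (s := a - ε) hε.le).2
  have u3 := hW _ (hramp (a - ε))
  have u4 := gaussianReal_Ioc_le v ha (s := a - ε) (by linarith) hε.le
  have u5 := hsplit (a - ε)
  have l1 := (ramp_bounds μ (s := a) hε.le).2
  have l2 := (ramp_bounds (gaussianReal 0 v) (s := a) hε.le).1
  have l3 := hW _ (hramp a)
  have l4 := gaussianReal_Ioc_le v ha (s := a) (by linarith) hε.le
  have l5 := hsplit a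
  rw [sub_add_cancel] at u1 u4 u5
  rw [abs_le] at u3 l3 ⊢
  have k1 := key (μ.real (Set.Ioi a)) ((gaussianReal 0 v).real (Set.Ioi (a - ε))) W
    (by linarith)
  have k2 := key ((gaussianReal 0 v).real (Set.Ioi (a + ε))) (μ.real (Set.Ioi a)) W
    (by linarith)
  constructor <;> linarith

variable {ι : Type*} [Fintype ι] [DecidableEq ι]

local notation "𝔼" => EuclideanSpace ℝ ι

lemma map_inner_multivariateGaussian {SY : Matrix ι ι ℝ} (hSY : SY.PosSemidef) (ζ : 𝔼) :
    (multivariateGaussian 0 SY).map (fun y => ⟪y, ζ⟫) = gaussianReal 0 (quad SY ζ).toNNReal := by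
  have : IsProbabilityMeasure ((multivariateGaussian 0 SY).map (fun y => ⟪y, ζ⟫)) :=
    Measure.isProbabilityMeasure_map (by fun_prop)
  apply Measure.ext_of_charFun
  ext t
  have h1 : charFun ((multivariateGaussian 0 SY).map (fun y => ⟪y, ζ⟫)) t
      = charFun (multivariateGaussian 0 SY) (t • ζ) := by
    rw [charFun_apply, charFun_apply, integral_map (by fun_prop) (by fun_prop)]
    simp [inner_smul_right]
  rw [h1, charFun_multivariateGaussian hSY, charFun_gaussianReal]
  congr 1
  rw [Real.coe_toNNReal _ (quad_nonneg hSY ζ)]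
  simp [quad, mulVec_smul]
  ring

/-- The projection on a unit vector is 1-Lipschitz, so Wasserstein bounds pass to projections. -/
lemma abs_projection_tail_le {SY : Matrix ι ι ℝ} (hSY : SY.PosSemidef) (π : Measure 𝔼)
    [IsProbabilityMeasure π] {W : ℝ}
    (hW : ∀ h : 𝔼 → ℝ, LipschitzWith 1 h →
      |∫ y, h y ∂π - ∫ y, h y ∂(multivariateGaussian 0 SY)| ≤ W)
    {ζ : 𝔼} (hζ : ‖ζ‖ = 1) {a ε : ℝ} (hε : 0 < ε) (hεa : ε ≤ a / 2) :
    |(π {y | a < ⟪y, ζ⟫}).toReal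
      - ((gaussianReal 0 (quad SY ζ).toNNReal) (Set.Ioi a)).toReal|
      ≤ W / ε + ε * (4 * √(quad SY ζ) / a ^ 2) := by
  have hp : IsProbabilityMeasure (π.map (fun y => ⟪y, ζ⟫)) :=
    Measure.isProbabilityMeasure_map (by fun_prop)
  have hm : Measurable fun y : 𝔼 => ⟪y, ζ⟫ := by fun_prop
  have h := abs_tail_sub_le (π.map (fun y => ⟪y, ζ⟫)) (quad SY ζ).toNNReal (W := W) ?_ hε hεa
  · rw [measureReal_def, Measure.map_apply hm measurableSet_Ioi,
      Real.coe_toNNReal _ (quad_nonneg hSY ζ)] at h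
    exact h
  · intro f hf
    rw [← map_inner_multivariateGaussian hSY, integral_map hm.aemeasurable
      hf.continuous.aestronglyMeasurable, integral_map hm.aemeasurable
      hf.continuous.aestronglyMeasurable]
    refine hW (fun y => f ⟪y, ζ⟫) (LipschitzWith.of_dist_le_mul fun x y => ?_)
    refine (hf.dist_le_mul _ _).trans ?_
    rw [NNReal.coe_one, one_mul, one_mul, Real.dist_eq, ← inner_sub_left, dist_eq_norm]
    simpa [hζ] using abs_real_inner_le_norm (x - y) ζ

end Tail

/-! ### Rates -/

section Final
open MeasureTheory ProbabilityTheory Matrix Filter Topology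
open scoped RealInnerProductSpace NNReal

variable {ι : Type*} [Fintype ι] [DecidableEq ι]

local notation "𝔼" => EuclideanSpace ℝ ι

/-- A law with the centered Gaussian characteristic function is Mathlib's `multivariateGaussian`. -/
lemma eq_multivariateGaussian {SY : Matrix ι ι ℝ} (hSY : SY.PosSemidef) (γ : Measure 𝔼)
    [IsProbabilityMeasure γ]
    (hγ : ∀ t : 𝔼, (∫ x, Complex.exp (Complex.I * ((⟪t, x⟫ : ℝ) : ℂ)) ∂γ)
      = Complex.exp (-(1/2 : ℂ) * ((⟪t, Matrix.toEuclideanLin SY t⟫ : ℝ) : ℂ))) :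
    γ = multivariateGaussian 0 SY := by
  apply Measure.ext_of_charFun
  ext t
  have e : ∀ x : 𝔼, Complex.exp (((⟪x, t⟫ : ℝ) : ℂ) * Complex.I)
      = Complex.exp (Complex.I * ((⟪t, x⟫ : ℝ) : ℂ)) := fun x => by
    rw [real_inner_comm, mul_comm]
  rw [charFun_multivariateGaussian hSY, charFun_apply]
  simp_rw [e]
  rw [hγ]
  congr 1
  have := quad_eq_inner SY t
  rw [quad] at this
  simp only [inner_zero_right, Complex.ofReal_zero, zero_mul, zero_sub]
  rw [this]
  change -(1/2 : ℂ) * ((⟪t, toEuclideanCLM (𝕜 := ℝ) SY t⟫ : ℝ) : ℂ) = _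
  ring

/-- For `α` small the Wasserstein rate is small enough for ramps of width `a √(√α log (1/α))` to
stay inside `[a / 2, ∞)`. -/
lemma exists_rate_small : ∃ α₁ : ℝ, 0 < α₁ ∧ ∀ α ∈ Set.Ioo 0 α₁,
    √α * Real.log (1 / α) ≤ 1 / 4 := by
  have h := tendsto_log_mul_rpow_nhdsGT_zero (r := 1 / 2) (by norm_num)
  have h2 := h.eventually (lt_mem_nhds (show (-(1 / 4) : ℝ) < 0 by norm_num))
  obtain ⟨u, hu, hsub⟩ := mem_nhdsGT_iff_exists_Ioo_subset.1 h2
  refine ⟨u, hu, fun α hα => ?_⟩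
  have := hsub hα
  rw [Set.mem_ofPred_eq, ← Real.sqrt_eq_rpow] at this
  rw [one_div, Real.log_inv]
  linarith

lemma add_smul_toEuclideanLin (B : Matrix ι ι ℝ) (α : ℝ) (x : 𝔼) :
    x + α • Matrix.toEuclideanLin B x = toEuclideanCLM (𝕜 := ℝ) (1 + α • B) x := by
  rw [map_add, map_one, map_smul]
  rfl

/-- Tail bound from the Wasserstein bound, with ramps of width `a √δ` where
`δ = √α log (1/α)`; this width balances the Wasserstein error against the Gaussian mass
blurred by a ramp. -/
lemma tail_rate {SY : Matrix ι ι ℝ} (hSY : SY.PosSemidef) (π : Measure 𝔼)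
    [IsProbabilityMeasure π] {L U α : ℝ} (hLq : ∀ x : 𝔼, quad SY x ≤ L * ‖x‖ ^ 2)
    (hα0 : 0 < α) (hα1 : α < 1) (hsmall : √α * Real.log (1 / α) ≤ 1 / 4)
    (hW : ∀ h : 𝔼 → ℝ, LipschitzWith 1 h →
      |∫ y, h y ∂π - ∫ y, h y ∂(multivariateGaussian 0 SY)| ≤ U * (√α * Real.log (1 / α)))
    {ζ : 𝔼} (hζ : ‖ζ‖ = 1) {a : ℝ} (ha : 0 < a) :
    |(π {y | a < ⟪y, ζ⟫}).toReal
      - ((gaussianReal 0 (⟪ζ, Matrix.toEuclideanLin SY ζ⟫ : ℝ).toNNReal) (Set.Ioi a)).toReal|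
      ≤ (U + 4 * √L) * (α ^ ((1 : ℝ) / 4) * √(Real.log (1 / α)) / a) := by
  set δ := √α * Real.log (1 / α) with hδ
  have hlog : 0 < Real.log (1 / α) := by
    rw [one_div, Real.log_inv, neg_pos]
    exact Real.log_neg hα0 hα1
  have hδ0 : 0 < δ := mul_pos (Real.sqrt_pos.2 hα0) hlog
  have hδs : √δ * √δ = δ := Real.mul_self_sqrt hδ0.le
  have hδp : 0 < √δ := Real.sqrt_pos.2 hδ0
  have hδh : √δ ≤ 1 / 2 := by
    rw [Real.sqrt_le_left (by norm_num)]
    linarith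
  have hrate : α ^ ((1 : ℝ) / 4) * √(Real.log (1 / α)) = √δ := by
    rw [hδ, Real.sqrt_mul (Real.sqrt_nonneg α), Real.sqrt_eq_rpow α, Real.sqrt_eq_rpow (α ^ _),
      ← Real.rpow_mul hα0.le]
    norm_num
  have htail := abs_projection_tail_le hSY π (hW) hζ
    (mul_pos ha hδp) (by nlinarith : a * √δ ≤ a / 2)
  have hv : √(quad SY ζ) ≤ √L := Real.sqrt_le_sqrt (by simpa [hζ] using hLq ζ)
  rw [hrate]
  have hq : (⟪ζ, Matrix.toEuclideanLin SY ζ⟫ : ℝ) = quad SY ζ := (quad_eq_inner SY ζ).symm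
  rw [hq]
  refine htail.trans ?_
  have e : U * δ / (a * √δ) = U * (√δ / a) := by
    rw [← hδs]; rw [Real.sqrt_mul_self hδp.le]; field_simp
  rw [e, add_mul]
  refine add_le_add_right ?_ _
  have e2 : a * √δ * (4 * √L / a ^ 2) = 4 * √L * (√δ / a) := by field_simp
  rw [← e2]
  gcongr

lemma exists_unique_invariant_euclidean (M : Matrix ι ι ℝ)
    (hM : Summable fun k => ‖(toEuclideanCLM (𝕜 := ℝ) M) ^ k‖) (β : ℝ)
    (ν : Measure 𝔼) [IsProbabilityMeasure ν] (hν : Integrable (fun x => x) ν) :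
    ∃ π : Measure 𝔼, IsProbabilityMeasure π ∧ Integrable (fun y => y) π ∧
      (π.prod ν).map (fun p => toEuclideanCLM (𝕜 := ℝ) M p.1 + β • p.2) = π ∧
      ∀ π' : Measure 𝔼, IsProbabilityMeasure π' →
        (π'.prod ν).map (fun p => toEuclideanCLM (𝕜 := ℝ) M p.1 + β • p.2) = π' → π' = π :=
  exists_unique_invariant (E := 𝔼) _ hM β ν hν

end Final

end LinSA

open MeasureTheory Matrix
open scoped RealInnerProductSpace NNReal

/-- linear stochastic approximation, i.i.d. noise.
For a Hurwitz matrix `B`, `b ∈ ℝ^d` with unique root `x*` of `Bx + b = 0`, i.i.d. noise law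
`ν` with mean zero, covariance `Σ ≻ 0` and finite third moment, and `Σ_Y ⪰ 0` solving
`BΣ_Y + Σ_Y Bᵀ + Σ = 0`, there exist `α' > 0` and constants `U₂, U₂'` such that for all
`α ∈ (0,α')` the rescaled chain `Y_{k+1} = (I+αB)Y_k + √α ξ_k` has a unique invariant law
`π_α`, which satisfies the Wasserstein-1 bound `U₂ α^{1/2} log(1/α)` against `N(0,Σ_Y)` and
the non-uniform tail bound `U₂' α^{1/4}(log(1/α))^{1/2}/a` for projections. -/
theorem stmt16 {d : ℕ} (hd : 1 ≤ d)
    (B : Matrix (Fin d) (Fin d) ℝ) (b : EuclideanSpace ℝ (Fin d))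
    (hHurwitz : ∀ z ∈ spectrum ℂ (B.map Complex.ofReal), z.re < 0)
    (xstar : EuclideanSpace ℝ (Fin d))
    (hxstar : Matrix.toEuclideanLin B xstar + b = 0)
    (hxstaruniq : ∀ x, Matrix.toEuclideanLin B x + b = 0 → x = xstar)
    (ν : Measure (EuclideanSpace ℝ (Fin d))) [IsProbabilityMeasure ν]
    (S : Matrix (Fin d) (Fin d) ℝ) (hS : S.PosDef)
    (hmean : (∫ x, x ∂ν) = 0)
    (hcov : ∀ i j, (∫ x, x i * x j ∂ν) = S i j)
    (hm3 : Integrable (fun x => ‖x‖ ^ 3) ν)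
    (SY : Matrix (Fin d) (Fin d) ℝ) (hSY : SY.PosSemidef)
    (hLyap : B * SY + SY * Bᵀ + S = 0)
    (γ : Measure (EuclideanSpace ℝ (Fin d))) [IsProbabilityMeasure γ]
    (hγ : ∀ t : EuclideanSpace ℝ (Fin d),
      (∫ x, Complex.exp (Complex.I * ((⟪t, x⟫ : ℝ) : ℂ)) ∂γ)
        = Complex.exp (-(1/2 : ℂ) * ((⟪t, Matrix.toEuclideanLin SY t⟫ : ℝ) : ℂ))) :
    ∃ α' : ℝ, 0 < α' ∧ ∃ U₂ U₂' : ℝ, ∀ α ∈ Set.Ioo (0:ℝ) α',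
      ∃ πα : Measure (EuclideanSpace ℝ (Fin d)), IsProbabilityMeasure πα ∧
        Measure.map (fun p : EuclideanSpace ℝ (Fin d) × EuclideanSpace ℝ (Fin d) =>
          (p.1 + α • Matrix.toEuclideanLin B p.1) + Real.sqrt α • p.2) (πα.prod ν) = πα ∧
        (∀ π' : Measure (EuclideanSpace ℝ (Fin d)), IsProbabilityMeasure π' →
          Measure.map (fun p : EuclideanSpace ℝ (Fin d) × EuclideanSpace ℝ (Fin d) =>
            (p.1 + α • Matrix.toEuclideanLin B p.1) + Real.sqrt α • p.2) (π'.prod ν) = π' →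
          π' = πα) ∧
        (∀ h : EuclideanSpace ℝ (Fin d) → ℝ, LipschitzWith 1 h →
          |(∫ y, h y ∂πα) - ∫ y, h y ∂γ| ≤ U₂ * (Real.sqrt α * Real.log (1/α))) ∧
        (∀ ζ : EuclideanSpace ℝ (Fin d), ‖ζ‖ = 1 → ∀ a : ℝ, 0 < a →
          |(πα {y | a < ⟪y, ζ⟫}).toReal
            - ((ProbabilityTheory.gaussianReal 0
                  (⟪ζ, Matrix.toEuclideanLin SY ζ⟫ : ℝ).toNNReal) (Set.Ioi a)).toReal|
            ≤ U₂' * (α ^ ((1:ℝ)/4) * Real.sqrt (Real.log (1/α)) / a)) := by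
  obtain rfl := LinSA.eq_multivariateGaussian hSY γ hγ
  have hν3 := LinSA.memLp_id_of_integrable hm3
  obtain ⟨α', U, hα', hαe, hU, H⟩ := LinSA.exists_wasserstein_bound hS hSY hLyap ν hmean hcov hν3
  obtain ⟨α₁, hα₁, Hsmall⟩ := LinSA.exists_rate_small
  obtain ⟨L, hL, hLq⟩ := LinSA.quad_le SY
  refine ⟨min α' α₁, lt_min hα' hα₁, U, U + 4 * √L, fun α hα => ?_⟩
  have hα0 : 0 < α := hα.1
  obtain ⟨hsum, hW⟩ := H α ⟨hα0, hα.2.trans_le (min_le_left _ _)⟩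
  have hαlt : α < 1 := (hα.2.trans_le (min_le_left _ _)).trans_le (hαe.trans (by simp))
  have hsmall := Hsmall α ⟨hα0, hα.2.trans_le (min_le_right _ _)⟩
  obtain ⟨π, hπ, hπi, hinv, huniq⟩ := LinSA.exists_unique_invariant_euclidean
    (1 + α • B) hsum (√α) ν (hν3.integrable (by norm_num))
  have hmap : (fun p : EuclideanSpace ℝ (Fin d) × EuclideanSpace ℝ (Fin d) =>
      (p.1 + α • Matrix.toEuclideanLin B p.1) + √α • p.2)
      = fun p => toEuclideanCLM (𝕜 := ℝ) (1 + α • B) p.1 + √α • p.2 :=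
    funext fun p => by rw [LinSA.add_smul_toEuclideanLin]
  rw [hmap]
  refine ⟨π, hπ, hinv, huniq, hW π hπ hπi hinv, fun ζ hζ a ha => ?_⟩
  exact LinSA.tail_rate hSY π hLq hα0
    hαlt hsmall
    (hW π hπ hπi hinv) hζ ha
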